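/- There exist constants c > 0 and C > 0 such that for all integers d ≥ 2 and m ≥ d, the expected star discrepancy of a jittered sampling point set P of N = m^d points in [0,1)^d satisfies c · d · m^((d−1)/2) · √(1 + log(m/d)) ≤ E[D*(P)] ≤ C · d · m^((d−1)/2) · √(1 + log(m/d)). -/

import Mathlib

open MeasureTheory ProbabilityTheory Real

noncomputable section

/-- The axis-aligned cube `∏_i [x_i/m, x_i/m + 1/m)` of the `m`-grid partition of `[0,1)^d`. -/
def jitterCube (m d : ℕ) (x : Fin d → Fin m) : Set (Fin d → ℝ) :=
  Set.univ.pi fun i => Set.Ico ((x i : ℝ) / m) ((x i : ℝ) / m + 1 / m)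

/-- The distribution of a jittered sampling point configuration: independently, one point
uniformly distributed in each of the `m^d` cubes. -/
def jitterMeasure (m d : ℕ) : Measure ((Fin d → Fin m) → (Fin d → ℝ)) :=
  Measure.pi fun x => ((m : ENNReal) ^ d) • volume.restrict (jitterCube m d x)

open scoped Classical in
/-- Signed (non-normalized) discrepancy `|P ∩ A| - N·λ(A)` with `N = m^d` of a point
configuration `P`. -/
def jdisc (m d : ℕ) (P : (Fin d → Fin m) → (Fin d → ℝ)) (A : Set (Fin d → ℝ)) : ℝ :=
  ((Finset.univ.filter fun x => P x ∈ A).card : ℝ) - (m : ℝ) ^ d * (volume A).toReal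

/-- The anchored box `[0,y) = ∏_i [0, y_i)`. -/
def anchoredBox (d : ℕ) (y : Fin d → ℝ) : Set (Fin d → ℝ) :=
  Set.univ.pi fun i => Set.Ico 0 (y i)

/-- The (non-normalized) star discrepancy `D*(P) = sup_{y ∈ [0,1)^d} |disc([0,y))|`. -/
def starDisc (m d : ℕ) (P : (Fin d → Fin m) → (Fin d → ℝ)) : ℝ :=
  ⨆ y : {y : Fin d → ℝ // ∀ i, y i ∈ Set.Ico (0 : ℝ) 1}, |jdisc m d P (anchoredBox d y.1)|

/-- The expected star discrepancy of a jittered sampling point set of `m^d` points. -/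
def expStarDisc (m d : ℕ) : ℝ :=
  ∫ P, starDisc m d P ∂(jitterMeasure m d)

/-- The uniform distribution on a cube. -/
def cubeMeas (m d : ℕ) (x : Fin d → Fin m) : Measure (Fin d → ℝ) :=
  ((m : ENNReal) ^ d) • volume.restrict (jitterCube m d x)

lemma jitterMeasure_eq (m d : ℕ) : jitterMeasure m d = Measure.pi (cubeMeas m d) := rfl

lemma measurableSet_jitterCube (m d : ℕ) (x : Fin d → Fin m) :
    MeasurableSet (jitterCube m d x) :=
  MeasurableSet.univ_pi fun _ => measurableSet_Ico

lemma measurableSet_anchoredBox (d : ℕ) (y : Fin d → ℝ) : MeasurableSet (anchoredBox d y) :=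
  MeasurableSet.univ_pi fun _ => measurableSet_Ico

lemma volume_jitterCube (m d : ℕ) (x : Fin d → Fin m) :
    volume (jitterCube m d x) = (ENNReal.ofReal (1 / m)) ^ d := by
  unfold jitterCube
  rw [Real.volume_pi_Ico]
  simp

instance cubeMeas_prob (m d : ℕ) [NeZero m] (x : Fin d → Fin m) :
    IsProbabilityMeasure (cubeMeas m d x) := by
  constructor
  have hm : (0 : ℝ) < m := by exact_mod_cast Nat.pos_of_ne_zero (NeZero.ne m)
  rw [cubeMeas, Measure.smul_apply, Measure.restrict_apply_univ, volume_jitterCube, smul_eq_mul,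
    ← mul_pow, ← ENNReal.ofReal_natCast, ← ENNReal.ofReal_mul hm.le]
  rw [mul_one_div_cancel hm.ne']
  simp

instance jitterMeasure_prob (m d : ℕ) [NeZero m] : IsProbabilityMeasure (jitterMeasure m d) := by
  rw [jitterMeasure_eq]; infer_instance

/-- coordinates below are determined by the floor -/
lemma mem_jitterCube_iff (m d : ℕ) [NeZero m] (x : Fin d → Fin m) (p : Fin d → ℝ) :
    p ∈ jitterCube m d x ↔ ∀ i, (x i : ℝ) ≤ m * p i ∧ m * p i < x i + 1 := by
  have hm : (0 : ℝ) < m := by exact_mod_cast Nat.pos_of_ne_zero (NeZero.ne m)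
  simp only [jitterCube, Set.mem_pi, Set.mem_univ, true_imp_iff, Set.mem_Ico]
  refine forall_congr' fun i => ?_
  rw [div_le_iff₀ hm, ← add_div, lt_div_iff₀ hm, mul_comm]

lemma jitterCube_disjoint (m d : ℕ) [NeZero m] (x x' : Fin d → Fin m) (h : x ≠ x') :
    Disjoint (jitterCube m d x) (jitterCube m d x') := by
  rw [Set.disjoint_left]
  intro p hp hp'
  rw [mem_jitterCube_iff] at hp hp'
  apply h
  funext i
  have h1 := hp i
  have h2 := hp' i
  have h3 : ((x i : ℕ) : ℝ) < (x' i : ℕ) + 1 := by linarith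
  have h4 : ((x' i : ℕ) : ℝ) < (x i : ℕ) + 1 := by linarith
  have h3' : (x i : ℕ) < (x' i : ℕ) + 1 := by exact_mod_cast h3
  have h4' : (x' i : ℕ) < (x i : ℕ) + 1 := by exact_mod_cast h4
  apply Fin.ext
  omega

lemma exists_jitterCube (m d : ℕ) [NeZero m] (p : Fin d → ℝ) (hp : ∀ i, p i ∈ Set.Ico (0 : ℝ) 1) :
    ∃ x, p ∈ jitterCube m d x := by
  have hm : (0 : ℝ) < m := by exact_mod_cast Nat.pos_of_ne_zero (NeZero.ne m)
  have hf : ∀ i, 0 ≤ m * p i := fun i => mul_nonneg hm.le (hp i).1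
  refine ⟨fun i => ⟨⌊m * p i⌋₊, ?_⟩, ?_⟩
  · rw [Nat.floor_lt (hf i)]
    have := (hp i).2
    nlinarith
  · rw [mem_jitterCube_iff]
    intro i
    exact ⟨Nat.floor_le (hf i), Nat.lt_floor_add_one _⟩

lemma sum_cubeMeas (m d : ℕ) [NeZero m] (A : Set (Fin d → ℝ)) (hA : MeasurableSet A)
    (hA1 : A ⊆ anchoredBox d 1) :
    ∑ x, (cubeMeas m d x).real A = (m : ℝ) ^ d * (volume A).toReal := by
  have h1 : volume A = ∑ x : Fin d → Fin m, volume (A ∩ jitterCube m d x) := by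
    rw [← measure_biUnion_finset]
    · congr 1
      ext p
      simp only [Finset.mem_univ, Set.iUnion_true, Set.mem_iUnion, Set.mem_inter_iff]
      constructor
      · intro hp
        obtain ⟨x, hx⟩ := exists_jitterCube m d p (fun i => by
          have := hA1 hp i (Set.mem_univ _); simpa using this)
        exact ⟨x, hp, hx⟩
      · rintro ⟨x, hp, -⟩; exact hp
    · intro x _ x' _ hxx
      exact ((jitterCube_disjoint m d x x' hxx).mono Set.inter_subset_right Set.inter_subset_right)
    · intro x _
      exact hA.inter (measurableSet_jitterCube m d x)
  rw [h1, ENNReal.toReal_sum, Finset.mul_sum]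
  · refine Finset.sum_congr rfl fun x _ => ?_
    rw [Measure.real, cubeMeas, Measure.smul_apply, Measure.restrict_apply hA, smul_eq_mul,
      ENNReal.toReal_mul]
    simp
  · intro x _
    refine ne_top_of_le_ne_top ?_ (measure_mono Set.inter_subset_right)
    rw [volume_jitterCube]
    exact ENNReal.pow_ne_top ENNReal.ofReal_ne_top

lemma jdisc_eq (m d : ℕ) [NeZero m] (P : (Fin d → Fin m) → (Fin d → ℝ))
    (A : Set (Fin d → ℝ)) (hA : MeasurableSet A) (hA1 : A ⊆ anchoredBox d 1) :
    jdisc m d P A = ∑ x, (A.indicator (fun _ => (1 : ℝ)) (P x) - (cubeMeas m d x).real A) := by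
  classical
  rw [Finset.sum_sub_distrib, sum_cubeMeas m d A hA hA1, jdisc]
  congr 1
  rw [Finset.card_filter]
  push_cast
  refine Finset.sum_congr rfl fun x _ => ?_
  simp [Set.indicator_apply]

lemma anchoredBox_mono (d : ℕ) {y z : Fin d → ℝ} (h : ∀ i, y i ≤ z i) :
    anchoredBox d y ⊆ anchoredBox d z :=
  Set.pi_mono fun i _ => Set.Ico_subset_Ico_right (h i)

lemma volume_anchoredBox (d : ℕ) (y : Fin d → ℝ) (hy : ∀ i, 0 ≤ y i) :
    (volume (anchoredBox d y)).toReal = ∏ i, y i := by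
  unfold anchoredBox
  rw [Real.volume_pi_Ico, ENNReal.toReal_prod]
  exact Finset.prod_congr rfl fun i _ => by simp [hy i]

lemma volume_anchoredBox_ne_top (d : ℕ) (y : Fin d → ℝ) : volume (anchoredBox d y) ≠ ⊤ := by
  unfold anchoredBox
  rw [Real.volume_pi_Ico]
  exact ENNReal.prod_ne_top fun i _ => ENNReal.ofReal_ne_top

lemma ae_mem_cube (m d : ℕ) [NeZero m] :
    ∀ᵐ P ∂(jitterMeasure m d), ∀ x, P x ∈ jitterCube m d x := by
  rw [ae_all_iff]
  intro x
  have h : ∀ᵐ p ∂(cubeMeas m d x), p ∈ jitterCube m d x := by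
    unfold cubeMeas
    exact Measure.ae_smul_measure (ae_restrict_mem (measurableSet_jitterCube m d x)) _
  rw [jitterMeasure_eq]
  exact (measurePreserving_eval (cubeMeas m d) x).quasiMeasurePreserving.ae h

lemma measurable_jdisc (m d : ℕ) [NeZero m] (A : Set (Fin d → ℝ)) (hA : MeasurableSet A)
    (hA1 : A ⊆ anchoredBox d 1) : Measurable fun P => jdisc m d P A := by
  simp_rw [jdisc_eq m d _ A hA hA1]
  refine Finset.measurable_sum _ fun x _ => ?_
  exact ((measurable_const.indicator hA).comp (measurable_pi_apply x)).sub_const _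


lemma integrable_of_bdd {Ω : Type*} [MeasurableSpace Ω] {μ : Measure Ω} [IsFiniteMeasure μ]
    {f : Ω → ℝ} (hf : Measurable f) (C : ℝ) (h : ∀ x, |f x| ≤ C) : Integrable f μ :=
  Integrable.of_bound hf.aestronglyMeasurable C (Filter.Eventually.of_forall h)

/-- one-cube exponential moment bound -/
lemma factor_bound {E : Type*} [MeasurableSpace E] (ν : Measure E) [IsProbabilityMeasure ν]
    (A B : Set E) (hA : MeasurableSet A) (hB : MeasurableSet B) (l : ℝ) (hl : |l| ≤ 1) :
    Integrable (fun p => exp (l * ((A.indicator (fun _ => (1 : ℝ)) p - ν.real A)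
        - (B.indicator (fun _ => (1 : ℝ)) p - ν.real B)))) ν ∧
    ∫ p, exp (l * ((A.indicator (fun _ => (1 : ℝ)) p - ν.real A)
        - (B.indicator (fun _ => (1 : ℝ)) p - ν.real B))) ∂ν ≤ exp (l ^ 2 * ν.real (symmDiff A B)) := by
  set f : E → ℝ := fun p => A.indicator (fun _ => (1 : ℝ)) p - B.indicator (fun _ => (1 : ℝ)) p
    with hf
  set c := ν.real A - ν.real B with hc
  have hfm : Measurable f := (measurable_const.indicator hA).sub (measurable_const.indicator hB)
  have hfb : ∀ p, |f p| ≤ 1 := by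
    intro p
    by_cases h1 : p ∈ A <;> by_cases h2 : p ∈ B <;> simp [hf, h1, h2]
  have hlf : ∀ p, |l * f p| ≤ 1 := fun p => by
    rw [abs_mul]; exact mul_le_one₀ hl (abs_nonneg _) (hfb p)
  have hfint : Integrable f ν := integrable_of_bdd hfm 1 hfb
  have hfi : ∫ p, f p ∂ν = c := by
    rw [hf, integral_sub, integral_indicator_const _ hA, integral_indicator_const _ hB]
    · simp [hc]
    · exact (integrable_const _).indicator hA
    · exact (integrable_const _).indicator hB
  have hsq : ∀ p, (symmDiff A B).indicator (fun _ => (1 : ℝ)) p = f p ^ 2 := by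
    intro p
    by_cases h1 : p ∈ A <;> by_cases h2 : p ∈ B <;>
      simp [hf, h1, h2, Set.mem_symmDiff]
  have hS : MeasurableSet (symmDiff A B) := hA.symmDiff hB
  have hrew : ∀ p, exp (l * ((A.indicator (fun _ => (1 : ℝ)) p - ν.real A)
        - (B.indicator (fun _ => (1 : ℝ)) p - ν.real B))) = exp (-(l * c)) * exp (l * f p) := by
    intro p
    rw [← exp_add]; congr 1; simp only [hf, hc]; ring
  simp_rw [hrew]
  have hei : Integrable (fun p => exp (l * f p)) ν := by
    refine integrable_of_bdd (by fun_prop) (exp 1) fun p => ?_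
    rw [abs_exp]
    exact exp_le_exp.2 ((le_abs_self _).trans (hlf p))
  refine ⟨hei.const_mul _, ?_⟩
  rw [integral_const_mul]
  have hindi : Integrable ((symmDiff A B).indicator (fun _ => (1 : ℝ))) ν :=
    (integrable_const _).indicator hS
  have h1 : ∫ p, exp (l * f p) ∂ν ≤ 1 + l * c + l ^ 2 * ν.real (symmDiff A B) := by
    have : ∫ p, exp (l * f p) ∂ν ≤
        ∫ p, ((1 + l * f p) + l ^ 2 * (symmDiff A B).indicator (fun _ => (1 : ℝ)) p) ∂ν := by
      refine integral_mono hei (((integrable_const _).add (hfint.const_mul l)).add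
        (hindi.const_mul _)) fun p => ?_
      have := (abs_le.1 (Real.abs_exp_sub_one_sub_id_le (hlf p))).2
      simp only [hsq]
      nlinarith
    refine this.trans (le_of_eq ?_)
    have hi1 : Integrable (fun p => 1 + l * f p) ν := (integrable_const _).add (hfint.const_mul l)
    rw [integral_add hi1 (hindi.const_mul _),
      integral_add (integrable_const _) (hfint.const_mul l), integral_const_mul,
      integral_const_mul, hfi, integral_indicator_const _ hS]
    simp
  calc exp (-(l * c)) * ∫ p, exp (l * f p) ∂ν
      ≤ exp (-(l * c)) * (1 + l * c + l ^ 2 * ν.real (symmDiff A B)) := by gcongr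
    _ ≤ exp (-(l * c)) * exp (l * c + l ^ 2 * ν.real (symmDiff A B)) := by
        gcongr
        have := add_one_le_exp (l * c + l ^ 2 * ν.real (symmDiff A B))
        linarith
    _ = _ := by rw [← exp_add]; congr 1; ring

lemma mgf_bound (m d : ℕ) [NeZero m] (A B : Set (Fin d → ℝ)) (hA : MeasurableSet A)
    (hB : MeasurableSet B) (hA1 : A ⊆ anchoredBox d 1) (hB1 : B ⊆ anchoredBox d 1)
    (l : ℝ) (hl : |l| ≤ 1) :
    Integrable (fun P => exp (l * (jdisc m d P A - jdisc m d P B))) (jitterMeasure m d) ∧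
    ∫ P, exp (l * (jdisc m d P A - jdisc m d P B)) ∂(jitterMeasure m d)
      ≤ exp (l ^ 2 * ((m : ℝ) ^ d * (volume (symmDiff A B)).toReal)) := by
  have hS1 : symmDiff A B ⊆ anchoredBox d 1 := by
    intro p hp
    rcases hp with hp | hp
    · exact hA1 hp.1
    · exact hB1 hp.1
  obtain ⟨h, hh⟩ : ∃ h : (Fin d → Fin m) → (Fin d → ℝ) → ℝ, h = fun x p =>
        exp (l * ((A.indicator (fun _ => (1 : ℝ)) p - (cubeMeas m d x).real A)
        - (B.indicator (fun _ => (1 : ℝ)) p - (cubeMeas m d x).real B))) := ⟨_, rfl⟩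
  have hrew : ∀ P : (Fin d → Fin m) → (Fin d → ℝ),
      exp (l * (jdisc m d P A - jdisc m d P B)) = ∏ x, h x (P x) := by
    intro P
    rw [jdisc_eq m d P A hA hA1, jdisc_eq m d P B hB hB1, ← Finset.sum_sub_distrib,
      Finset.mul_sum, exp_sum, hh]
  have hfac : ∀ x, Integrable (h x) (cubeMeas m d x) ∧
      ∫ p, h x p ∂(cubeMeas m d x) ≤ exp (l ^ 2 * (cubeMeas m d x).real (symmDiff A B)) := by
    intro x
    have := factor_bound (cubeMeas m d x) A B hA hB l hl
    rw [hh]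
    exact this
  have hpos : ∀ x p, 0 ≤ h x p := by
    intro x p
    rw [hh]
    exact (exp_pos _).le
  rw [funext hrew, jitterMeasure_eq]
  refine ⟨?_, ?_⟩
  · exact Integrable.fintype_prod fun x => (hfac x).1
  · rw [integral_fintype_prod_eq_prod, ← sum_cubeMeas m d _ (hA.symmDiff hB) hS1, Finset.mul_sum,
      exp_sum]
    exact Finset.prod_le_prod (fun x _ => integral_nonneg (hpos x)) fun x _ => (hfac x).2

/-- Maximal inequality: a single integrable majorant for finitely many discrepancy differences. -/
lemma maximal_aux (m d : ℕ) [NeZero m] (I : Finset (Set (Fin d → ℝ) × Set (Fin d → ℝ)))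
    (v ℓ : ℝ)
    (hI : ∀ q ∈ I, MeasurableSet q.1 ∧ MeasurableSet q.2 ∧ q.1 ⊆ anchoredBox d 1 ∧
      q.2 ⊆ anchoredBox d 1 ∧ (m : ℝ) ^ d * (volume (symmDiff q.1 q.2)).toReal ≤ v)
    (hcard : 2 * (I.card : ℝ) ≤ exp ℓ) (l : ℝ) (hl0 : 0 < l) (hl : l ≤ 1) :
    ∃ W : ((Fin d → Fin m) → (Fin d → ℝ)) → ℝ, Integrable W (jitterMeasure m d) ∧
      (∀ P, ∀ q ∈ I, |jdisc m d P q.1 - jdisc m d P q.2| ≤ W P) ∧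
      ∫ P, W P ∂(jitterMeasure m d) ≤ (ℓ + l ^ 2 * v) / l := by
  set K := ℓ + l ^ 2 * v with hK
  have hl1 : |l| ≤ 1 := by rwa [abs_of_pos hl0]
  have hl2 : |-l| ≤ 1 := by rwa [abs_neg]
  set D : ((Fin d → Fin m) → (Fin d → ℝ)) → (Set (Fin d → ℝ) × Set (Fin d → ℝ)) → ℝ :=
    fun P q => jdisc m d P q.1 - jdisc m d P q.2 with hD
  have hm := fun q hq => mgf_bound m d q.1 q.2 (hI q hq).1 (hI q hq).2.1 (hI q hq).2.2.1
    (hI q hq).2.2.2.1 l hl1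
  have hm' := fun q hq => mgf_bound m d q.1 q.2 (hI q hq).1 (hI q hq).2.1 (hI q hq).2.2.1
    (hI q hq).2.2.2.1 (-l) hl2
  have hi1 : ∀ q ∈ I, Integrable (fun P => exp (l * D P q) + exp (-l * D P q))
      (jitterMeasure m d) := fun q hq => (hm q hq).1.add (hm' q hq).1
  have hint : Integrable (fun P => ∑ q ∈ I, (exp (l * D P q) + exp (-l * D P q)))
      (jitterMeasure m d) :=
    integrable_finsetSum _ fun q hq => (hm q hq).1.add (hm' q hq).1
  refine ⟨fun P => l⁻¹ * ((K - 1) + exp (-K) * ∑ q ∈ I, (exp (l * D P q) + exp (-l * D P q))),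
    ?_, ?_, ?_⟩
  · exact ((integrable_const _).add (hint.const_mul _)).const_mul _
  · intro P q hq
    have h1 : exp (l * |D P q|) ≤ ∑ q ∈ I, (exp (l * D P q) + exp (-l * D P q)) := by
      calc exp (l * |D P q|) ≤ exp (l * D P q) + exp (-l * D P q) := by
            rcases abs_cases (D P q) with ⟨h, _⟩ | ⟨h, _⟩
            · rw [h]; linarith [exp_pos (-l * D P q)]
            · rw [h]
              have : l * -D P q = -l * D P q := by ring
              rw [this]; linarith [exp_pos (l * D P q)]
        _ ≤ _ := Finset.single_le_sum (f := fun q => exp (l * D P q) + exp (-l * D P q))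
            (fun q _ => (add_pos (exp_pos _) (exp_pos _)).le) hq
    have h2 : l * |D P q| ≤ (K - 1) + exp (-K) * exp (l * |D P q|) := by
      rw [← exp_add]
      have := add_one_le_exp (-K + l * |D P q|)
      linarith
    have h3 : exp (-K) * exp (l * |D P q|) ≤
      exp (-K) * ∑ q ∈ I, (exp (l * D P q) + exp (-l * D P q)) := by gcongr
    change |D P q| ≤ l⁻¹ * ((K - 1) + exp (-K) * ∑ q ∈ I, (exp (l * D P q) + exp (-l * D P q)))
    rw [← div_eq_inv_mul, le_div_iff₀ hl0]
    linarith
  · rw [integral_const_mul, integral_add (integrable_const _) (hint.const_mul _),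
      integral_const_mul, div_eq_inv_mul]
    have h1 : ∫ P, ∑ q ∈ I, (exp (l * D P q) + exp (-l * D P q)) ∂(jitterMeasure m d)
        ≤ exp K := by
      rw [integral_finsetSum _ hi1]
      calc _ ≤ ∑ q ∈ I, 2 * exp (l ^ 2 * v) := by
            refine Finset.sum_le_sum fun q hq => ?_
            rw [integral_add (hm q hq).1 (hm' q hq).1]
            have e1 : exp (l ^ 2 * ((m : ℝ) ^ d * (volume (symmDiff q.1 q.2)).toReal))
              ≤ exp (l ^ 2 * v) := by
              refine exp_le_exp.2 ?_
              have := (hI q hq).2.2.2.2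
              gcongr
            have e2 := (hm q hq).2
            have e3 := (hm' q hq).2
            rw [neg_sq] at e3
            linarith
        _ = (2 * (I.card : ℝ)) * exp (l ^ 2 * v) := by
            rw [Finset.sum_const, nsmul_eq_mul]; ring
        _ ≤ exp ℓ * exp (l ^ 2 * v) := by gcongr
        _ = exp K := by rw [← exp_add]
    have h2 : exp (-K) * ∫ P, ∑ q ∈ I, (exp (l * D P q) + exp (-l * D P q)) ∂(jitterMeasure m d)
        ≤ 1 := by
      calc _ ≤ exp (-K) * exp K := by gcongr
        _ = 1 := by rw [← exp_add]; simp
    have h3 : ∫ _P : (Fin d → Fin m) → (Fin d → ℝ), (K - 1) ∂(jitterMeasure m d) = K - 1 := by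
      simp
    rw [h3]
    gcongr
    linarith

lemma maximal (m d : ℕ) [NeZero m] (I : Finset (Set (Fin d → ℝ) × Set (Fin d → ℝ)))
    (v ℓ : ℝ) (hv : 0 < v) (hℓ : 0 < ℓ)
    (hI : ∀ q ∈ I, MeasurableSet q.1 ∧ MeasurableSet q.2 ∧ q.1 ⊆ anchoredBox d 1 ∧
      q.2 ⊆ anchoredBox d 1 ∧ (m : ℝ) ^ d * (volume (symmDiff q.1 q.2)).toReal ≤ v)
    (hcard : 2 * (I.card : ℝ) ≤ exp ℓ) :
    ∃ W : ((Fin d → Fin m) → (Fin d → ℝ)) → ℝ, Integrable W (jitterMeasure m d) ∧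
      (∀ P, ∀ q ∈ I, |jdisc m d P q.1 - jdisc m d P q.2| ≤ W P) ∧
      ∫ P, W P ∂(jitterMeasure m d) ≤ 2 * √(v * ℓ) + 2 * ℓ := by
  have hs : 0 ≤ √(v * ℓ) := sqrt_nonneg _
  rcases le_total v ℓ with h | h
  · obtain ⟨W, h1, h2, h3⟩ := maximal_aux m d I v ℓ hI hcard 1 one_pos le_rfl
    refine ⟨W, h1, h2, h3.trans ?_⟩
    simp only [one_pow, one_mul, div_one]
    linarith
  · have hl0 : 0 < √(ℓ / v) := sqrt_pos.2 (by positivity)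
    obtain ⟨W, h1, h2, h3⟩ := maximal_aux m d I v ℓ hI hcard (√(ℓ / v)) hl0
      (sqrt_le_one.2 (div_le_one_of_le₀ h hv.le))
    refine ⟨W, h1, h2, h3.trans ?_⟩
    rw [div_le_iff₀ hl0, sq_sqrt (by positivity)]
    have : √(v * ℓ) * √(ℓ / v) = ℓ := by
      rw [← sqrt_mul (by positivity)]
      have : v * ℓ * (ℓ / v) = ℓ ^ 2 := by field_simp
      rw [this, sqrt_sq hℓ.le]
    have h4 : ℓ / v * v = ℓ := by field_simp
    rw [h4]
    have : (2 * √(v * ℓ) + 2 * ℓ) * √(ℓ / v) = 2 * ℓ + 2 * ℓ * √(ℓ / v) := by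
      rw [add_mul, mul_assoc, this]
    rw [this]
    have : 0 ≤ 2 * ℓ * √(ℓ / v) := by positivity
    linarith


lemma count_bound (d T : ℕ) (hd : 1 ≤ d) (hT : 1 ≤ T) :
    ((((Fintype.piFinset fun _ : Fin d => Finset.range (T + 1)).filter
      fun k => ∑ i, k i ≤ T).card : ℕ) : ℝ) ≤ (exp 1 * (1 + (T : ℝ) / d)) ^ d := by
  have hd0 : (0 : ℝ) < d := by exact_mod_cast hd
  have hT0 : (0 : ℝ) < T := by exact_mod_cast hT
  set s : ℝ := d / T with hs
  have hs0 : 0 < s := by positivity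
  have h1 : ∀ k ∈ (Fintype.piFinset fun _ : Fin d => Finset.range (T + 1)).filter
      (fun k => ∑ i, k i ≤ T), (1 : ℝ) ≤ exp (s * T) * ∏ i, exp (-s) ^ (k i) := by
    intro k hk
    have hk2 : ∑ i, k i ≤ T := (Finset.mem_filter.1 hk).2
    have hk3 : ((∑ i, k i : ℕ) : ℝ) ≤ T := by exact_mod_cast hk2
    rw [Finset.prod_pow_eq_pow_sum, ← exp_nat_mul, ← exp_add]
    refine one_le_exp ?_
    nlinarith
  set S := (Fintype.piFinset fun _ : Fin d => Finset.range (T + 1)).filter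
      (fun k => ∑ i, k i ≤ T) with hS
  calc (S.card : ℝ) = ∑ k ∈ S, (1 : ℝ) := by simp
    _ ≤ ∑ k ∈ S, exp (s * T) * ∏ i, exp (-s) ^ (k i) := Finset.sum_le_sum h1
    _ ≤ ∑ k ∈ (Fintype.piFinset fun _ : Fin d => Finset.range (T + 1)),
        exp (s * T) * ∏ i, exp (-s) ^ (k i) :=
        Finset.sum_le_sum_of_subset_of_nonneg (Finset.filter_subset _ _)
          fun k _ _ => by positivity
    _ = exp (s * T) * (∑ j ∈ Finset.range (T + 1), exp (-s) ^ j) ^ d := by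
        rw [← Finset.mul_sum, ← Finset.prod_univ_sum (fun _ : Fin d => Finset.range (T + 1))
          (fun _ j => exp (-s) ^ j)]
        simp
    _ ≤ exp (s * T) * (1 + (T : ℝ) / d) ^ d := by
        gcongr
        have he : exp (-s) < 1 := by simpa using hs0
        have hg := mul_neg_geom_sum (exp (-s)) (T + 1)
        have hp : 0 ≤ exp (-s) ^ (T + 1) := by positivity
        have h2 : (1 - exp (-s)) * (1 + 1 / s) ≥ 1 := by
          have h3 : exp (-s) ≤ 1 / (1 + s) := by
            rw [exp_neg, ← one_div]
            exact one_div_le_one_div_of_le (by positivity) (by linarith [add_one_le_exp s])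
          have h4 : (1 - 1 / (1 + s)) * (1 + 1 / s) = 1 := by field_simp; ring
          have h5 : (1 - 1 / (1 + s)) * (1 + 1 / s) ≤ (1 - exp (-s)) * (1 + 1 / s) := by gcongr
          linarith
        have h6 : (T : ℝ) / d = 1 / s := by rw [hs]; field_simp
        rw [h6]
        have h7 : 0 < 1 - exp (-s) := by linarith
        nlinarith
    _ = (exp 1 * (1 + (T : ℝ) / d)) ^ d := by
        rw [mul_pow, ← exp_nat_mul]
        congr 2
        rw [hs]; field_simp

lemma exists_le_sum_eq {ι : Type*} [Fintype ι] (k : ι → ℕ) (M : ℕ) (h : M ≤ ∑ i, k i) :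
    ∃ k' : ι → ℕ, (∀ i, k' i ≤ k i) ∧ ∑ i, k' i = M := by
  classical
  induction M with
  | zero => exact ⟨0, fun i => Nat.zero_le _, by simp⟩
  | succ M ih =>
    obtain ⟨k', h1, h2⟩ := ih (by omega)
    have : ∃ i, k' i < k i := by
      by_contra hcon
      push Not at hcon
      have := Finset.sum_le_sum fun i (_ : i ∈ Finset.univ) => hcon i
      omega
    obtain ⟨i, hi⟩ := this
    refine ⟨Function.update k' i (k' i + 1), fun j => ?_, ?_⟩
    · by_cases hj : j = i
      · subst hj; simp; omega
      · simp [hj, h1 j]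
    · rw [Finset.sum_update_of_mem (Finset.mem_univ i)]
      have := Finset.add_sum_erase Finset.univ k' (Finset.mem_univ i)
      rw [Finset.sdiff_singleton_eq_erase]
      omega

lemma exists_cover (d : ℕ) (hd : 1 ≤ d) (δ : ℝ) (hδ0 : 0 < δ) (hδ1 : δ ≤ 1) :
    ∃ F : Finset (Fin d → ℝ), (F.card : ℝ) ≤ exp (d * (4 + 2 * log (1 / δ))) ∧
      (∀ z ∈ F, ∀ i, 0 ≤ z i ∧ z i ≤ 1) ∧
      ∀ y : Fin d → ℝ, (∀ i, y i ∈ Set.Ico (0 : ℝ) 1) →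
        ∃ a ∈ F, ∃ b ∈ F, (∀ i, a i ≤ y i) ∧ (∀ i, y i ≤ b i) ∧ ∏ i, b i - ∏ i, a i ≤ δ := by
  classical
  have hd0 : (0 : ℝ) < d := by exact_mod_cast hd
  have hd1 : (1 : ℝ) ≤ d := by exact_mod_cast hd
  set η : ℝ := δ / d with hη
  have hη0 : 0 < η := by positivity
  set M : ℕ := ⌈d / δ ^ 2⌉₊ with hM
  have hM1 : d / δ ^ 2 ≤ M := Nat.le_ceil _
  have hM2 : (M : ℝ) < d / δ ^ 2 + 1 := Nat.ceil_lt_add_one (by positivity)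
  have hMδ : exp (-(η * M)) ≤ δ := by
    have h1 : 1 / δ ≤ η * M := by
      calc 1 / δ = η * (d / δ ^ 2) := by rw [hη]; field_simp
        _ ≤ _ := by gcongr
    rw [exp_neg, inv_le_comm₀ (exp_pos _) hδ0, ← one_div]
    linarith [add_one_le_exp (η * M)]
  set T : ℕ := M + d with hTdef
  set S := (Fintype.piFinset fun _ : Fin d => Finset.range (T + 1)).filter
      (fun k => ∑ i, k i ≤ T) with hS
  have hmemS : ∀ k : Fin d → ℕ, ∑ i, k i ≤ T → k ∈ S := by
    intro k hk
    rw [hS, Finset.mem_filter, Fintype.mem_piFinset]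
    refine ⟨fun i => ?_, hk⟩
    have := Finset.single_le_sum (f := k) (fun j _ => Nat.zero_le _) (Finset.mem_univ i)
    rw [Finset.mem_range]; omega
  set g : (Fin d → ℕ) → (Fin d → ℝ) := fun k i => exp (-(η * k i)) with hg
  have hgprod : ∀ k, ∏ i, g k i = exp (-(η * (∑ i, k i : ℕ))) := by
    intro k
    rw [hg, ← exp_sum]
    congr 1
    push_cast
    rw [Finset.mul_sum, Finset.sum_neg_distrib]
  refine ⟨insert 0 (S.image g), ?_, ?_, ?_⟩
  · have hx : (1 : ℝ) ≤ 1 / δ ^ 2 := by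
      rw [le_div_iff₀ (by positivity)]; nlinarith
    have h1 : ((insert 0 (S.image g)).card : ℝ) ≤ S.card + 1 := by
      exact_mod_cast (Finset.card_insert_le _ _).trans (by gcongr; exact Finset.card_image_le)
    have h2 := count_bound d T hd (by omega)
    have h3 : 1 + (T : ℝ) / d ≤ 4 * (1 / δ ^ 2) := by
      have : (T : ℝ) / d ≤ 1 / δ ^ 2 + 1 + 1 := by
        rw [div_le_iff₀ hd0, hTdef]; push_cast
        have : (1 / δ ^ 2 + 1 + 1) * (d : ℝ) = d / δ ^ 2 + d + d := by ring
        rw [this]; linarith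
      linarith
    have h4 : (exp 1 * (1 + (T : ℝ) / d)) ^ d ≤ (exp 1 * (4 * (1 / δ ^ 2))) ^ d := by
      gcongr
    have h5 : (1 : ℝ) ≤ (exp 1 * (4 * (1 / δ ^ 2))) ^ d := by
      refine one_le_pow₀ ?_
      have := add_one_le_exp (1 : ℝ)
      nlinarith
    have h6 : 2 * (exp 1 * (4 * (1 / δ ^ 2))) ^ d ≤ (2 * (exp 1 * (4 * (1 / δ ^ 2)))) ^ d := by
      rw [mul_pow 2]
      gcongr
      exact le_self_pow₀ (by norm_num) (by omega)
    have h7 : 2 * (exp 1 * (4 * (1 / δ ^ 2))) ≤ exp (4 + 2 * log (1 / δ)) := by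
      rw [exp_add]
      have e1 : exp (2 * log (1 / δ)) = 1 / δ ^ 2 := by
        rw [show (2 : ℝ) * log (1 / δ) = ((2 : ℕ) : ℝ) * log (1 / δ) by norm_num, exp_nat_mul,
          exp_log (by positivity)]
        rw [div_pow]; norm_num
      rw [e1]
      have e2 : 8 * exp 1 ≤ exp 4 := by
        have : exp 4 = exp 1 ^ 3 * exp 1 := by rw [← pow_succ, ← exp_nat_mul]; norm_num
        rw [this]
        have h2 : (2 : ℝ) ≤ exp 1 := by linarith [add_one_le_exp (1 : ℝ)]
        gcongr
        calc (8 : ℝ) = 2 ^ 3 := by norm_num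
          _ ≤ _ := by gcongr
      calc _ = 8 * exp 1 * (1 / δ ^ 2) := by ring
        _ ≤ _ := by gcongr
    have h8 : (2 * (exp 1 * (4 * (1 / δ ^ 2)))) ^ d ≤ exp (d * (4 + 2 * log (1 / δ))) := by
      rw [exp_nat_mul]
      gcongr
    linarith
  · intro z hz i
    rw [Finset.mem_insert, Finset.mem_image] at hz
    rcases hz with rfl | ⟨k, -, rfl⟩
    · simp
    · refine ⟨(exp_pos _).le, exp_le_one_iff.2 ?_⟩
      have : 0 ≤ η * (k i : ℝ) := by positivity
      linarith
  · intro y hy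
    set k0 : Fin d → ℕ := fun i => if y i = 0 then M else ⌊-log (y i) / η⌋₊ with hk0
    have hlog : ∀ i, y i ≠ 0 → 0 ≤ -log (y i) / η := by
      intro i hi
      have : log (y i) ≤ 0 := log_nonpos (hy i).1 (hy i).2.le
      exact div_nonneg (by linarith) hη0.le
    have hup : ∀ i, y i ≤ exp (-(η * k0 i)) := by
      intro i
      by_cases hi : y i = 0
      · rw [hi]; exact (exp_pos _).le
      · have hpos : 0 < y i := lt_of_le_of_ne (hy i).1 (Ne.symm hi)
        rw [← log_le_iff_le_exp hpos]
        have := Nat.floor_le (hlog i hi)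
        simp only [hk0, if_neg hi]
        rw [le_div_iff₀ hη0] at this
        linarith
    by_cases hM' : M ≤ ∑ i, k0 i
    · obtain ⟨k, hk1, hk2⟩ := exists_le_sum_eq k0 M hM'
      refine ⟨0, Finset.mem_insert_self _ _, g k, Finset.mem_insert_of_mem
        (Finset.mem_image_of_mem _ (hmemS k (by omega))), fun i => (hy i).1, fun i => ?_, ?_⟩
      · refine (hup i).trans (exp_le_exp.2 ?_)
        have : (k i : ℝ) ≤ k0 i := by exact_mod_cast hk1 i
        have : η * k i ≤ η * k0 i := by gcongr
        linarith
      · rw [hgprod, hk2]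
        have : ∏ i : Fin d, (0 : Fin d → ℝ) i = 0 :=
          Finset.prod_eq_zero (Finset.mem_univ ⟨0, hd⟩) rfl
        rw [this]; linarith
    · push Not at hM'
      have hne : ∀ i, y i ≠ 0 := by
        intro i hi
        have := Finset.single_le_sum (f := k0) (fun j _ => Nat.zero_le _) (Finset.mem_univ i)
        simp only [hk0, if_pos hi] at this hM'
        omega
      have hsum1 : ∑ i, (k0 i + 1) = ∑ i, k0 i + d := by
        rw [Finset.sum_add_distrib]; simp
      refine ⟨g fun i => k0 i + 1, Finset.mem_insert_of_mem
        (Finset.mem_image_of_mem _ (hmemS _ (by omega))), g k0, Finset.mem_insert_of_mem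
        (Finset.mem_image_of_mem _ (hmemS _ (by omega))), fun i => ?_, fun i => hup i, ?_⟩
      · have hpos : 0 < y i := lt_of_le_of_ne (hy i).1 (Ne.symm (hne i))
        simp only [hg]
        rw [← le_log_iff_exp_le hpos]
        have := Nat.lt_floor_add_one (-log (y i) / η)
        rw [div_lt_iff₀ hη0] at this
        simp only [hk0, if_neg (hne i)]
        push_cast
        linarith
      · rw [hgprod, hgprod, hsum1]
        push_cast
        set s : ℝ := ∑ i, (k0 i : ℝ)
        have hs0 : 0 ≤ s := Finset.sum_nonneg fun i _ => Nat.cast_nonneg _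
        have e1 : -(η * (s + d)) = -(η * s) + -δ := by rw [hη]; field_simp; ring
        rw [e1, exp_add]
        have e2 : exp (-(η * s)) ≤ 1 := exp_le_one_iff.2 (by
          have : 0 ≤ η * s := by positivity
          linarith)
        have e3 := add_one_le_exp (-δ)
        have e4 := exp_pos (-(η * s))
        have e5 : exp (-δ) ≤ 1 := exp_le_one_iff.2 (by linarith)
        nlinarith


lemma numeric_level (d Q R : ℝ) (hd : 0 ≤ d) (hQ : 1 ≤ Q) (hR : 1 ≤ R) (j : ℕ) :
    √((2 * d * Q ^ 2 / 2 ^ j) * (11 * d * R ^ 2 * (1 + j))) ≤ 15 * (d * Q * R) * (3 / 4) ^ j := by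
  apply sqrt_le_iff.2 ⟨by positivity, ?_⟩
  have h1 : (1 : ℝ) + j ≤ 8 * (9 / 8) ^ j := by
    have := one_add_mul_le_pow (show (-2 : ℝ) ≤ 1 / 8 by norm_num) j
    have h2 : (1 : ℝ) + 1 / 8 = 9 / 8 := by norm_num
    rw [h2] at this
    linarith
  have h3 : ((3 / 4 : ℝ) ^ j) ^ 2 = (9 / 8) ^ j / 2 ^ j := by
    rw [← div_pow, ← pow_mul, mul_comm j 2, pow_mul]; norm_num
  calc (2 * d * Q ^ 2 / 2 ^ j) * (11 * d * R ^ 2 * (1 + j))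
      ≤ (2 * d * Q ^ 2 / 2 ^ j) * (11 * d * R ^ 2 * (8 * (9 / 8) ^ j)) := by gcongr
    _ = 176 * (d * Q * R) ^ 2 * ((9 / 8) ^ j / 2 ^ j) := by ring
    _ ≤ 225 * (d * Q * R) ^ 2 * ((9 / 8) ^ j / 2 ^ j) := by gcongr; norm_num
    _ = (15 * (d * Q * R) * (3 / 4) ^ j) ^ 2 := by rw [← h3]; ring

lemma numeric_total (d Q R : ℝ) (hd : 0 ≤ d) (hQ : 1 ≤ Q) (hR : 1 ≤ R) (hRQ : R ^ 2 ≤ 2 * Q)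
    (J : ℕ) (hJ1 : Q ≤ 2 ^ J) (hJ2 : (2 : ℝ) ^ J ≤ 2 * Q) :
    (2 * √((2 * d * Q ^ 2 / 2 ^ 0) * (11 * d * R ^ 2 * (1 + (0 : ℕ)))) +
      2 * (11 * d * R ^ 2 * (1 + (0 : ℕ)))) +
    (∑ j ∈ Finset.range (J + 1), (2 * √((2 * d * Q ^ 2 / 2 ^ j) * (11 * d * R ^ 2 * (1 + j))) +
      2 * (11 * d * R ^ 2 * (1 + j)))) + d * Q ^ 2 / 2 ^ J ≤ 6000 * (d * Q * R) := by
  have hX : 0 ≤ d * Q * R := by positivity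
  have hJ4 : R * ((J : ℝ) + 1) ^ 2 ≤ 128 * Q := by
    apply le_of_sq_le_sq _ (by positivity)
    have h1 : (1 : ℝ) + J ≤ 8 * (9 / 8) ^ J := by
      have := one_add_mul_le_pow (show (-2 : ℝ) ≤ 1 / 8 by norm_num) J
      have h2 : (1 : ℝ) + 1 / 8 = 9 / 8 := by norm_num
      rw [h2] at this
      linarith
    have h2 : ((J : ℝ) + 1) ^ 4 ≤ 4096 * 2 ^ J := by
      calc ((J : ℝ) + 1) ^ 4 ≤ (8 * (9 / 8) ^ J) ^ 4 := by gcongr; linarith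
        _ = 4096 * ((9 / 8) ^ 4) ^ J := by rw [mul_pow, ← pow_mul, ← pow_mul, mul_comm J]; norm_num
        _ ≤ 4096 * 2 ^ J := by gcongr; norm_num
    calc (R * ((J : ℝ) + 1) ^ 2) ^ 2 = R ^ 2 * ((J : ℝ) + 1) ^ 4 := by ring
      _ ≤ (2 * Q) * (4096 * (2 * Q)) := by gcongr; linarith
      _ = (128 * Q) ^ 2 := by ring
  have hlin : d * R ^ 2 * ((J : ℝ) + 1) ^ 2 ≤ 128 * (d * Q * R) := by
    calc d * R ^ 2 * ((J : ℝ) + 1) ^ 2 = d * R * (R * ((J : ℝ) + 1) ^ 2) := by ring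
      _ ≤ d * R * (128 * Q) := by gcongr
      _ = _ := by ring
  have h0 := numeric_level d Q R hd hQ hR 0
  have hs1 : ∑ j ∈ Finset.range (J + 1), √((2 * d * Q ^ 2 / 2 ^ j) * (11 * d * R ^ 2 * (1 + j)))
      ≤ 60 * (d * Q * R) := by
    calc _ ≤ ∑ j ∈ Finset.range (J + 1), 15 * (d * Q * R) * (3 / 4) ^ j :=
          Finset.sum_le_sum fun j _ => numeric_level d Q R hd hQ hR j
      _ = 15 * (d * Q * R) * ∑ j ∈ Finset.range (J + 1), (3 / 4 : ℝ) ^ j := by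
          rw [Finset.mul_sum]
      _ ≤ 15 * (d * Q * R) * 4 := by
          gcongr
          have := mul_neg_geom_sum (3 / 4 : ℝ) (J + 1)
          have : (0 : ℝ) ≤ (3 / 4) ^ (J + 1) := by positivity
          linarith
      _ = _ := by ring
  have hs2 : ∑ j ∈ Finset.range (J + 1), (11 * d * R ^ 2 * (1 + (j : ℝ)))
      ≤ 11 * (d * R ^ 2 * ((J : ℝ) + 1) ^ 2) := by
    calc _ ≤ ∑ j ∈ Finset.range (J + 1), (11 * d * R ^ 2 * ((J : ℝ) + 1)) := by
          refine Finset.sum_le_sum fun j hj => ?_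
          have : (j : ℝ) ≤ J := by exact_mod_cast Nat.lt_succ_iff.1 (Finset.mem_range.1 hj)
          have : 1 + (j : ℝ) ≤ J + 1 := by linarith
          gcongr
      _ = _ := by simp; ring
  have h1 : d * R ^ 2 * 1 ≤ d * R ^ 2 * ((J : ℝ) + 1) ^ 2 := by
    gcongr
    have : (0 : ℝ) ≤ J := Nat.cast_nonneg _
    nlinarith
  have h2 : d * Q ^ 2 / 2 ^ J ≤ d * Q * R := by
    rw [div_le_iff₀ (by positivity)]
    calc d * Q ^ 2 = d * Q * 1 * Q := by ring
      _ ≤ d * Q * R * 2 ^ J := by gcongr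
  rw [Finset.sum_add_distrib, ← Finset.mul_sum, ← Finset.mul_sum]
  simp only [pow_zero, mul_one, Nat.cast_zero] at h0 ⊢
  linarith

lemma prod_sub_le {ι : Type*} (s : Finset ι) (w z : ι → ℝ) (hw : ∀ i, 0 ≤ w i)
    (hwz : ∀ i, w i ≤ z i) (hz : ∀ i, z i ≤ 1) :
    ∏ i ∈ s, z i - ∏ i ∈ s, w i ≤ ∑ i ∈ s, (z i - w i) := by
  classical
  induction s using Finset.induction_on with
  | empty => simp
  | insert a s ha ih =>
    rw [Finset.prod_insert ha, Finset.prod_insert ha, Finset.sum_insert ha]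
    have h1 : ∏ i ∈ s, z i ≤ 1 := Finset.prod_le_one (fun i _ => (hw i).trans (hwz i))
      fun i _ => hz i
    have h2 : 0 ≤ ∏ i ∈ s, w i := Finset.prod_nonneg fun i _ => hw i
    have h3 : ∏ i ∈ s, w i ≤ ∏ i ∈ s, z i := Finset.prod_le_prod (fun i _ => hw i)
      fun i _ => hwz i
    have h4 := hw a
    have h5 := hwz a
    have h6 := hz a
    have e : z a * ∏ i ∈ s, z i - w a * ∏ i ∈ s, w i =
      (z a - w a) * ∏ i ∈ s, z i + w a * (∏ i ∈ s, z i - ∏ i ∈ s, w i) := by ring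
    rw [e]
    have : (z a - w a) * ∏ i ∈ s, z i ≤ (z a - w a) * 1 := by
      apply mul_le_mul_of_nonneg_left h1; linarith
    have : w a * (∏ i ∈ s, z i - ∏ i ∈ s, w i) ≤ 1 * (∏ i ∈ s, z i - ∏ i ∈ s, w i) := by
      apply mul_le_mul_of_nonneg_right <;> linarith
    linarith

lemma vol_symmDiff (d : ℕ) (a b : Fin d → ℝ) (ha : ∀ i, 0 ≤ a i) (hab : ∀ i, a i ≤ b i) :
    (volume (symmDiff (anchoredBox d a) (anchoredBox d b))).toReal = ∏ i, b i - ∏ i, a i := by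
  have hsub := anchoredBox_mono d hab
  rw [symmDiff_of_le hsub, ← volume_anchoredBox d a ha,
    ← volume_anchoredBox d b fun i => (ha i).trans (hab i)]
  exact measureReal_sdiff hsub (measurableSet_anchoredBox d a) (volume_anchoredBox_ne_top d b)

lemma symmDiff_ne_top (d : ℕ) (a b : Fin d → ℝ) :
    volume (symmDiff (anchoredBox d a) (anchoredBox d b)) ≠ ⊤ := by
  refine ne_top_of_le_ne_top ?_ (measure_mono (symmDiff_le_sup))
  exact (measure_union_lt_top (volume_anchoredBox_ne_top d a).lt_top
    (volume_anchoredBox_ne_top d b).lt_top).ne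

lemma vol_symmDiff_triangle (d : ℕ) (a b c : Fin d → ℝ) :
    (volume (symmDiff (anchoredBox d a) (anchoredBox d c))).toReal ≤
    (volume (symmDiff (anchoredBox d a) (anchoredBox d b))).toReal +
    (volume (symmDiff (anchoredBox d b) (anchoredBox d c))).toReal := by
  rw [← ENNReal.toReal_add (symmDiff_ne_top _ _ _) (symmDiff_ne_top _ _ _)]
  exact ENNReal.toReal_mono (ENNReal.add_ne_top.2 ⟨symmDiff_ne_top _ _ _, symmDiff_ne_top _ _ _⟩)
    (measure_symmDiff_le _ _ _)

lemma jdisc_le_of_le (m d : ℕ) (P : (Fin d → Fin m) → (Fin d → ℝ)) (a b : Fin d → ℝ)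
    (ha : ∀ i, 0 ≤ a i) (hab : ∀ i, a i ≤ b i) :
    jdisc m d P (anchoredBox d a) ≤
      jdisc m d P (anchoredBox d b) + (m : ℝ) ^ d * (∏ i, b i - ∏ i, a i) := by
  classical
  unfold jdisc
  rw [volume_anchoredBox d a ha, volume_anchoredBox d b fun i => (ha i).trans (hab i)]
  have h : ((Finset.univ.filter fun x => P x ∈ anchoredBox d a).card : ℝ) ≤
      ((Finset.univ.filter fun x => P x ∈ anchoredBox d b).card : ℝ) := by
    refine Nat.cast_le.2 (Finset.card_le_card fun x hx => ?_)
    simp only [Finset.mem_filter, Finset.mem_univ, true_and] at hx ⊢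
    exact anchoredBox_mono d hab hx
  have e : ∀ (h1 h2 : DecidablePred fun x => P x ∈ anchoredBox d a),
    (@Finset.filter _ (fun x => P x ∈ anchoredBox d a) h1 Finset.univ) =
    (@Finset.filter _ (fun x => P x ∈ anchoredBox d a) h2 Finset.univ) := by
    intro h1 h2; congr
  convert (show ((Finset.univ.filter fun x => P x ∈ anchoredBox d a).card : ℝ) -
    (m : ℝ) ^ d * ∏ i, a i ≤ ((Finset.univ.filter fun x => P x ∈ anchoredBox d b).card : ℝ) -
    (m : ℝ) ^ d * ∏ i, b i + (m : ℝ) ^ d * (∏ i, b i - ∏ i, a i) by linarith) using 4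

/-- Majorant for all pairs from two finite families. -/
lemma level (m d : ℕ) [NeZero m] (F G : Finset (Fin d → ℝ))
    (hF : ∀ z ∈ F, ∀ i, z i ≤ 1) (hG : ∀ z ∈ G, ∀ i, z i ≤ 1) (v ℓ : ℝ) (hv : 0 < v) (hℓ : 0 < ℓ)
    (hcard : 2 * ((F.card : ℝ) * G.card) ≤ exp ℓ) :
    ∃ W : ((Fin d → Fin m) → (Fin d → ℝ)) → ℝ, Integrable W (jitterMeasure m d) ∧
      (∀ P, ∀ a ∈ F, ∀ b ∈ G, (m : ℝ) ^ d *
        (volume (symmDiff (anchoredBox d a) (anchoredBox d b))).toReal ≤ v →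
        |jdisc m d P (anchoredBox d a) - jdisc m d P (anchoredBox d b)| ≤ W P) ∧
      ∫ P, W P ∂(jitterMeasure m d) ≤ 2 * √(v * ℓ) + 2 * ℓ := by
  classical
  set I : Finset (Set (Fin d → ℝ) × Set (Fin d → ℝ)) := ((F ×ˢ G).filter fun q => (m : ℝ) ^ d *
        (volume (symmDiff (anchoredBox d q.1) (anchoredBox d q.2))).toReal ≤ v).image
        (fun q => (anchoredBox d q.1, anchoredBox d q.2)) with hI
  have hone : ∀ z : Fin d → ℝ, (∀ i, z i ≤ 1) → anchoredBox d z ⊆ anchoredBox d 1 :=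
    fun z hz => anchoredBox_mono d hz
  obtain ⟨W, h1, h2, h3⟩ := maximal m d I v ℓ hv hℓ (by
    intro q hq
    rw [hI, Finset.mem_image] at hq
    obtain ⟨r, hr, rfl⟩ := hq
    rw [Finset.mem_filter, Finset.mem_product] at hr
    exact ⟨measurableSet_anchoredBox _ _, measurableSet_anchoredBox _ _, hone _ (hF _ hr.1.1),
      hone _ (hG _ hr.1.2), hr.2⟩) (by
    refine le_trans ?_ hcard
    have : I.card ≤ F.card * G.card := by
      rw [← Finset.card_product]
      exact Finset.card_image_le.trans (Finset.card_filter_le _ _)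
    have : (I.card : ℝ) ≤ (F.card : ℝ) * G.card := by exact_mod_cast this
    linarith)
  refine ⟨W, h1, fun P a ha b hb hab => h2 P (anchoredBox d a, anchoredBox d b) ?_, h3⟩
  rw [hI, Finset.mem_image]
  exact ⟨(a, b), Finset.mem_filter.2 ⟨Finset.mem_product.2 ⟨ha, hb⟩, hab⟩, rfl⟩

/-- Rounding down to the `m`-grid. -/
def gridFloor (m d : ℕ) (z : Fin d → ℝ) : Fin d → ℝ := fun i => (⌊(m : ℝ) * z i⌋₊ : ℝ) / m

lemma jdisc_grid (m d : ℕ) [NeZero m] (P : (Fin d → Fin m) → (Fin d → ℝ))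
    (hP : ∀ x, P x ∈ jitterCube m d x) (k : Fin d → ℕ) (hk : ∀ i, k i ≤ m) :
    jdisc m d P (anchoredBox d fun i => (k i : ℝ) / m) = 0 := by
  have hm : (0 : ℝ) < m := by exact_mod_cast Nat.pos_of_ne_zero (NeZero.ne m)
  have h1 : anchoredBox d (fun i => (k i : ℝ) / m) ⊆ anchoredBox d 1 := by
    refine anchoredBox_mono d fun i => ?_
    have : (k i : ℝ) ≤ m := by exact_mod_cast hk i
    exact div_le_one_of_le₀ this hm.le
  have hA := measurableSet_anchoredBox d (fun i => (k i : ℝ) / m)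
  have hiff : ∀ x p, p ∈ jitterCube m d x → (p ∈ anchoredBox d (fun i => (k i : ℝ) / m) ↔
      ∀ i, (x i : ℕ) < k i) := by
    intro x p hp
    rw [mem_jitterCube_iff] at hp
    simp only [anchoredBox, Set.mem_pi, Set.mem_univ, true_imp_iff, Set.mem_Ico]
    refine forall_congr' fun i => ?_
    rw [lt_div_iff₀ hm, mul_comm]
    have h2 := hp i
    constructor
    · rintro ⟨-, h3⟩
      have : ((x i : ℕ) : ℝ) < k i := by linarith
      exact_mod_cast this
    · intro h3
      have : ((x i : ℕ) : ℝ) + 1 ≤ k i := by exact_mod_cast h3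
      refine ⟨?_, by linarith⟩
      have h5 : (0 : ℝ) ≤ (x i : ℕ) := Nat.cast_nonneg _
      have : 0 ≤ m * p i := by linarith
      exact nonneg_of_mul_nonneg_right this hm
  rw [jdisc_eq m d P _ hA h1]
  refine Finset.sum_eq_zero fun x _ => ?_
  have hae : ∀ᵐ p ∂(cubeMeas m d x), p ∈ jitterCube m d x := by
    unfold cubeMeas
    exact Measure.ae_smul_measure (ae_restrict_mem (measurableSet_jitterCube m d x)) _
  by_cases hx : ∀ i, (x i : ℕ) < k i
  · rw [Set.indicator_of_mem ((hiff x _ (hP x)).2 hx)]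
    have : cubeMeas m d x (anchoredBox d fun i => (k i : ℝ) / m) = 1 := by
      rw [← mem_ae_iff_prob_eq_one hA]
      filter_upwards [hae] with p hp
      exact (hiff x p hp).2 hx
    simp [Measure.real, this]
  · rw [Set.indicator_of_notMem (fun h => hx ((hiff x _ (hP x)).1 h))]
    have : cubeMeas m d x (anchoredBox d fun i => (k i : ℝ) / m) = 0 := by
      rw [measure_eq_zero_iff_ae_notMem]
      filter_upwards [hae] with p hp h
      exact hx ((hiff x p hp).1 h)
    simp [Measure.real, this]


set_option maxHeartbeats 2000000 in
lemma upper_bound (d m : ℕ) (hd : 2 ≤ d) (hdm : d ≤ m) :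
    expStarDisc m d ≤ 6000 * d * (m : ℝ) ^ (((d : ℝ) - 1) / 2) *
      Real.sqrt (1 + Real.log ((m : ℝ) / d)) := by
  classical
  have : NeZero m := ⟨by omega⟩
  have hm : (0 : ℝ) < m := by exact_mod_cast (by omega : 0 < m)
  have hm1 : (1 : ℝ) ≤ m := by exact_mod_cast (by omega : 1 ≤ m)
  have hd0 : (0 : ℝ) < d := by exact_mod_cast (by omega : 0 < d)
  have hd2 : (2 : ℝ) ≤ d := by exact_mod_cast hd
  have hdm' : (d : ℝ) ≤ m := by exact_mod_cast hdm
  set Q : ℝ := (m : ℝ) ^ (((d : ℝ) - 1) / 2) with hQ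
  set Lg : ℝ := log ((m : ℝ) / d) with hLg
  set R : ℝ := √(1 + Lg) with hR
  have hLg0 : 0 ≤ Lg := log_nonneg (by rwa [le_div_iff₀ hd0, one_mul])
  have hR1 : 1 ≤ R := by rw [hR, one_le_sqrt]; linarith
  have hR2 : R ^ 2 = 1 + Lg := by rw [hR, sq_sqrt (by linarith)]
  have hQ2 : Q ^ 2 * m = (m : ℝ) ^ d := by
    rw [hQ, ← rpow_natCast, ← rpow_mul hm.le, ← rpow_add_one hm.ne', ← rpow_natCast]
    congr 1; push_cast; ring
  have hQm : √m ≤ Q := by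
    rw [hQ, sqrt_eq_rpow]
    exact rpow_le_rpow_of_exponent_le hm1 (by linarith)
  have hQ1 : 1 ≤ Q := le_trans (one_le_sqrt.2 hm1) hQm
  have hRQ : R ^ 2 ≤ 2 * Q := by
    have h1 : Lg ≤ log m := by
      apply log_le_log (by positivity)
      exact div_le_self hm.le (by linarith)
    have h2 : log m = 2 * log (√m) := by
      rw [log_sqrt hm.le]; ring
    have h3 : log (√m) ≤ √m - 1 := log_le_sub_one_of_pos (sqrt_pos.2 hm)
    rw [hR2]; linarith
  obtain ⟨n, hn1, hn2⟩ := exists_nat_pow_near hQ1 (one_lt_two (α := ℝ))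
  set J := n + 1 with hJ
  have hJ2 : (2 : ℝ) ^ J ≤ 2 * Q := by rw [hJ, pow_succ]; linarith
  have hnum := numeric_total d Q R hd0.le hQ1 hR1 hRQ J hn2.le hJ2
  -- scales
  set δ : ℕ → ℝ := fun j => (d : ℝ) / m / 2 ^ j with hδ
  have hδ0 : ∀ j, 0 < δ j := fun j => by simp only [hδ]; positivity
  have hδ1 : ∀ j, δ j ≤ 1 := fun j => by
    simp only [hδ]
    refine div_le_one_of_le₀ ?_ (by positivity)
    exact (div_le_one_of_le₀ hdm' hm.le).trans (one_le_pow₀ (by norm_num))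
  have hδs : ∀ j, δ (j + 1) ≤ δ j := fun j => by
    simp only [hδ]; gcongr <;> norm_num
  have hNδ : ∀ j, (m : ℝ) ^ d * δ j = d * Q ^ 2 / 2 ^ j := fun j => by
    simp only [hδ]; rw [← hQ2]; field_simp
  have hlogδ : ∀ j, log (1 / δ j) = Lg + j * log 2 := fun j => by
    have : 1 / δ j = (m / d) * 2 ^ j := by simp only [hδ]; field_simp
    rw [this, log_mul (by positivity) (by positivity), log_pow]
  choose F hF1 hF2 hF3 using fun j => exists_cover d (by omega) (δ j) (hδ0 j) (hδ1 j)
  set v : ℕ → ℝ := fun j => 2 * d * Q ^ 2 / 2 ^ j with hv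
  set ℓ : ℕ → ℝ := fun j => 11 * d * R ^ 2 * (1 + (j : ℝ)) with hℓ
  have hv0 : ∀ j, 0 < v j := fun j => by simp only [hv]; positivity
  have hℓ0 : ∀ j, 0 < ℓ j := fun j => by simp only [hℓ]; positivity
  have hlog2 : log 2 ≤ 1 := by linarith [log_two_lt_d9]
  have hlog20 : 0 ≤ log 2 := log_nonneg (by norm_num)
  have hcard : ∀ i j : ℕ, i ≤ j + 1 → 2 * (((F j).card : ℝ) * (F i).card) ≤ exp (ℓ j) := by
    intro i j hij
    have h2 : (2 : ℝ) ≤ exp 1 := by linarith [add_one_le_exp (1 : ℝ)]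
    calc 2 * (((F j).card : ℝ) * (F i).card)
        ≤ exp 1 * (exp (d * (4 + 2 * log (1 / δ j))) * exp (d * (4 + 2 * log (1 / δ i)))) := by
          gcongr
          · exact hF1 j
          · exact hF1 i
      _ = exp (1 + (d * (4 + 2 * log (1 / δ j)) + d * (4 + 2 * log (1 / δ i)))) := by
          rw [← exp_add, ← exp_add]
      _ ≤ exp (ℓ j) := by
          refine exp_le_exp.2 ?_
          rw [hlogδ, hlogδ]
          have hij' : (i : ℝ) ≤ j + 1 := by exact_mod_cast hij
          have hj0 : (0 : ℝ) ≤ j := Nat.cast_nonneg j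
          have hi0 : (0 : ℝ) ≤ i := Nat.cast_nonneg i
          have a1 : (j : ℝ) * log 2 ≤ j := by nlinarith
          have a2 : (i : ℝ) * log 2 ≤ j + 1 := by nlinarith
          simp only [hℓ]; rw [hR2]
          have a3 : 1 ≤ (d : ℝ) * (1 / 2) := by linarith
          have a4 : (1 + (d * (4 + 2 * (Lg + j * log 2)) + d * (4 + 2 * (Lg + i * log 2))) : ℝ)
              ≤ d * (1 / 2 + (4 + 2 * (Lg + j)) + (4 + 2 * (Lg + (j + 1)))) := by
            have : (d : ℝ) * (1 / 2 + (4 + 2 * (Lg + j)) + (4 + 2 * (Lg + (j + 1)))) =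
              d * (1 / 2) + (d * (4 + 2 * (Lg + j)) + d * (4 + 2 * (Lg + (j + 1)))) := by ring
            rw [this]
            gcongr
          refine a4.trans ?_
          have a5 : 1 / 2 + (4 + 2 * (Lg + j)) + (4 + 2 * (Lg + (j + 1))) ≤
            11 * (1 + Lg) * (1 + j) := by nlinarith
          calc (d : ℝ) * (1 / 2 + (4 + 2 * (Lg + j)) + (4 + 2 * (Lg + (j + 1))))
              ≤ d * (11 * (1 + Lg) * (1 + j)) := by gcongr
            _ = _ := by ring
  -- majorants
  choose W hW1 hW2 hW3 using fun j => level m d (F j) (F (j + 1)) (fun z hz i => (hF2 j z hz i).2)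
    (fun z hz i => (hF2 (j + 1) z hz i).2) (v j) (ℓ j) (hv0 j) (hℓ0 j) (hcard (j + 1) j le_rfl)
  obtain ⟨Wf, hWf1, hWf2, hWf3⟩ := level m d (F J) (F J) (fun z hz i => (hF2 J z hz i).2)
    (fun z hz i => (hF2 J z hz i).2) (v J) (ℓ J) (hv0 J) (hℓ0 J) (hcard J J (by omega))
  have hfl : ∀ z : Fin d → ℝ, (∀ i, 0 ≤ z i ∧ z i ≤ 1) → ∀ i, gridFloor m d z i ≤ z i ∧
      z i - gridFloor m d z i ≤ 1 / m ∧ 0 ≤ gridFloor m d z i := by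
    intro z hz i
    have h0 : 0 ≤ m * z i := mul_nonneg hm.le (hz i).1
    have h1 := Nat.floor_le h0
    have h2 := Nat.lt_floor_add_one (m * z i)
    refine ⟨?_, ?_, by unfold gridFloor; positivity⟩
    · unfold gridFloor
      rw [div_le_iff₀ hm]; linarith
    · unfold gridFloor
      rw [sub_le_iff_le_add, ← add_div, le_div_iff₀ hm]; linarith
  obtain ⟨Wb, hWb1, hWb2, hWb3⟩ := level m d (F 0) ((F 0).image (gridFloor m d))
    (fun z hz i => (hF2 0 z hz i).2) (by
      intro z hz i
      obtain ⟨w, hw, rfl⟩ := Finset.mem_image.1 hz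
      exact (hfl w (hF2 0 w hw) i).1.trans (hF2 0 w hw i).2) (v 0) (ℓ 0) (hv0 0) (hℓ0 0) (by
      refine le_trans ?_ (hcard 0 0 (by omega))
      have hci : (((F 0).image (gridFloor m d)).card : ℝ) ≤ (F 0).card := by
        exact_mod_cast Finset.card_image_le
      gcongr)
  -- pointwise bound
  have hpt : ∀ᵐ P ∂(jitterMeasure m d), starDisc m d P ≤
      Wb P + ((∑ j ∈ Finset.range J, W j P) + Wf P) + d * Q ^ 2 / 2 ^ J := by
    filter_upwards [ae_mem_cube m d] with P hP
    have : Nonempty {y : Fin d → ℝ // ∀ i, y i ∈ Set.Ico (0 : ℝ) 1} := ⟨⟨0, by simp⟩⟩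
    refine ciSup_le fun y => ?_
    obtain ⟨y, hy⟩ := y
    choose a ha b hb hay hyb hab using fun j => hF3 j y hy
    have ha0 : ∀ j i, 0 ≤ a j i := fun j i => (hF2 j _ (ha j) i).1
    have hyp : ∀ i, 0 ≤ y i := fun i => (hy i).1
    have hprod1 : ∀ j, ∏ i, a j i ≤ ∏ i, y i := fun j =>
      Finset.prod_le_prod (fun i _ => ha0 j i) fun i _ => hay j i
    have hprod2 : ∀ j, ∏ i, y i ≤ ∏ i, b j i := fun j =>
      Finset.prod_le_prod (fun i _ => hyp i) fun i _ => hyb j i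
    have hN : (0 : ℝ) ≤ (m : ℝ) ^ d := by positivity
    set D : (Fin d → ℝ) → ℝ := fun z => jdisc m d P (anchoredBox d z) with hD
    -- base
    have hbase : |D (a 0)| ≤ Wb P := by
      have h1 := hWb2 P (a 0) (ha 0) (gridFloor m d (a 0)) (Finset.mem_image_of_mem _ (ha 0)) (by
        have hz := hF2 0 _ (ha 0)
        rw [symmDiff_comm, vol_symmDiff d _ _ (fun i => (hfl _ hz i).2.2) (fun i => (hfl _ hz i).1)]
        have h3 := prod_sub_le Finset.univ (gridFloor m d (a 0)) (a 0)
          (fun i => (hfl _ hz i).2.2) (fun i => (hfl _ hz i).1) (fun i => (hz i).2)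
        have h4 : ∑ i, (a 0 i - gridFloor m d (a 0) i) ≤ d / m := by
          calc _ ≤ ∑ i : Fin d, (1 / m : ℝ) := Finset.sum_le_sum fun i _ => (hfl _ hz i).2.1
            _ = _ := by simp; ring
        calc (m : ℝ) ^ d * _ ≤ (m : ℝ) ^ d * (d / m) := by gcongr; exact h3.trans h4
          _ = d * Q ^ 2 := by rw [← hQ2]; field_simp
          _ ≤ v 0 := by simp only [hv]; have : 0 ≤ (d : ℝ) * Q ^ 2 := by positivity
                        simp; linarith)
      have h2 : jdisc m d P (anchoredBox d (gridFloor m d (a 0))) = 0 := by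
        refine jdisc_grid m d P hP (fun i => ⌊(m : ℝ) * a 0 i⌋₊) fun i => ?_
        apply Nat.floor_le_of_le
        have := (hF2 0 _ (ha 0) i).2
        nlinarith
      rw [h2, sub_zero] at h1
      exact h1
    have hay_vol : ∀ j, (volume (symmDiff (anchoredBox d (a j)) (anchoredBox d y))).toReal ≤ δ j := by
      intro j
      rw [vol_symmDiff d _ _ (ha0 j) (hay j)]
      linarith [hab j, hprod2 j]
    have hstep : ∀ j, |D (a j) - D (a (j + 1))| ≤ W j P := by
      intro j
      refine hW2 j P (a j) (ha j) (a (j + 1)) (ha (j + 1)) ?_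
      have h1 := vol_symmDiff_triangle d (a j) y (a (j + 1))
      have h2 := hay_vol j
      have h3 := hay_vol (j + 1)
      rw [symmDiff_comm] at h3
      have h4 : (volume (symmDiff (anchoredBox d (a j)) (anchoredBox d (a (j + 1))))).toReal
        ≤ 2 * δ j := by linarith [hδs j]
      calc _ ≤ (m : ℝ) ^ d * (2 * δ j) := by gcongr
        _ = v j := by rw [mul_left_comm, hNδ]; simp only [hv]; ring
    have hchain : ∀ k : ℕ, |D (a k)| ≤ Wb P + ∑ j ∈ Finset.range k, W j P := by
      intro k
      induction k with
      | zero => simpa using hbase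
      | succ k ih =>
        rw [Finset.sum_range_succ]
        have h1 := hstep k
        have h2 : |D (a (k + 1))| ≤ |D (a k)| + |D (a k) - D (a (k + 1))| := by
          have := abs_sub_abs_le_abs_sub (D (a (k + 1))) (D (a k))
          rw [abs_sub_comm] at this
          linarith
        linarith
    have hfin : |D (a J) - D (b J)| ≤ Wf P := by
      refine hWf2 P (a J) (ha J) (b J) (hb J) ?_
      rw [vol_symmDiff d _ _ (ha0 J) (fun i => (hay J i).trans (hyb J i))]
      have h5 : 0 ≤ (m : ℝ) ^ d * δ J := mul_nonneg hN (hδ0 J).le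
      calc _ ≤ (m : ℝ) ^ d * δ J := by gcongr; exact hab J
        _ ≤ 2 * ((m : ℝ) ^ d * δ J) := by linarith
        _ = v J := by rw [hNδ]; simp only [hv]; ring
    have hlo := jdisc_le_of_le m d P (a J) y (ha0 J) (hay J)
    have hup := jdisc_le_of_le m d P y (b J) hyp (hyb J)
    have e1 : (m : ℝ) ^ d * (∏ i, y i - ∏ i, a J i) ≤ d * Q ^ 2 / 2 ^ J := by
      rw [← hNδ]; gcongr; linarith [hab J, hprod2 J]
    have e2 : (m : ℝ) ^ d * (∏ i, b J i - ∏ i, y i) ≤ d * Q ^ 2 / 2 ^ J := by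
      rw [← hNδ]; gcongr; linarith [hab J, hprod1 J]
    have hc := hchain J
    have hc' := abs_le.1 hc
    have hf' := abs_le.1 hfin
    simp only [hD] at hc' hf'
    change |jdisc m d P (anchoredBox d y)| ≤ _
    rw [abs_le]
    constructor <;> linarith [abs_nonneg (D (a J) - D (b J))]
  have hsumint : Integrable (fun P => ∑ j ∈ Finset.range J, W j P) (jitterMeasure m d) :=
    integrable_finsetSum _ fun j _ => hW1 j
  have hi2 : Integrable (fun P => (∑ j ∈ Finset.range J, W j P) + Wf P) (jitterMeasure m d) :=
    hsumint.add hWf1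
  have hi3 : Integrable (fun P => Wb P + ((∑ j ∈ Finset.range J, W j P) + Wf P))
    (jitterMeasure m d) := hWb1.add hi2
  have hmain : expStarDisc m d ≤ ∫ P, (Wb P + ((∑ j ∈ Finset.range J, W j P) + Wf P) +
      d * Q ^ 2 / 2 ^ J) ∂(jitterMeasure m d) := by
    unfold expStarDisc
    refine integral_mono_of_nonneg (Filter.Eventually.of_forall fun P => ?_)
      (hi3.add (integrable_const _)) hpt
    exact Real.iSup_nonneg fun y => abs_nonneg _
  rw [integral_add hi3 (integrable_const _), integral_add hWb1 hi2, integral_add hsumint hWf1,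
    integral_finsetSum _ fun j _ => hW1 j] at hmain
  have hconst : ∫ _P : (Fin d → Fin m) → (Fin d → ℝ), (d * Q ^ 2 / 2 ^ J : ℝ) ∂(jitterMeasure m d)
    = d * Q ^ 2 / 2 ^ J := by simp
  rw [hconst] at hmain
  rw [Finset.sum_range_succ] at hnum
  have hsum : ∑ j ∈ Finset.range J, ∫ P, W j P ∂(jitterMeasure m d) ≤
    ∑ j ∈ Finset.range J, (2 * √(v j * ℓ j) + 2 * ℓ j) := Finset.sum_le_sum fun j _ => hW3 j
  simp only [hv, hℓ] at hsum hWf3 hWb3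
  calc expStarDisc m d ≤ 6000 * (d * Q * R) := by linarith
    _ = _ := by ring


lemma abs_jdisc_le (m d : ℕ) (P : (Fin d → Fin m) → (Fin d → ℝ)) (y : Fin d → ℝ)
    (hy : ∀ i, y i ∈ Set.Ico (0 : ℝ) 1) : |jdisc m d P (anchoredBox d y)| ≤ (m : ℝ) ^ d := by
  unfold jdisc
  rw [volume_anchoredBox d y fun i => (hy i).1]
  have h0 : 0 ≤ ∏ i, y i := Finset.prod_nonneg fun i _ => (hy i).1
  have h1 : ∏ i, y i ≤ 1 := Finset.prod_le_one (fun i _ => (hy i).1) fun i _ => (hy i).2.le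
  have hN : (0 : ℝ) ≤ (m : ℝ) ^ d := by positivity
  have h2 : (m : ℝ) ^ d * ∏ i, y i ≤ (m : ℝ) ^ d := mul_le_of_le_one_right hN h1
  have h3 : 0 ≤ (m : ℝ) ^ d * ∏ i, y i := by positivity
  rw [abs_le]
  constructor
  · have : (0 : ℝ) ≤ ((@Finset.filter _ (fun x => P x ∈ anchoredBox d y)
      (fun _ => Classical.propDecidable _) Finset.univ).card : ℝ) := Nat.cast_nonneg _
    linarith
  · have h4 : ((@Finset.filter _ (fun x => P x ∈ anchoredBox d y)
      (fun _ => Classical.propDecidable _) Finset.univ).card : ℝ) ≤ (m : ℝ) ^ d := by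
      have : (@Finset.filter _ (fun x => P x ∈ anchoredBox d y)
          (fun _ => Classical.propDecidable _) Finset.univ).card ≤
          (Finset.univ : Finset (Fin d → Fin m)).card := Finset.card_le_card (fun x _ => Finset.mem_univ x)
      rw [Finset.card_univ, Fintype.card_pi, Finset.prod_const, Finset.card_univ,
        Fintype.card_fin, Fintype.card_fin] at this
      exact_mod_cast this
    linarith

lemma bddAbove_jdisc (m d : ℕ) (P : (Fin d → Fin m) → (Fin d → ℝ)) :
    BddAbove (Set.range fun y : {y : Fin d → ℝ // ∀ i, y i ∈ Set.Ico (0 : ℝ) 1} =>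
      |jdisc m d P (anchoredBox d y.1)|) := by
  refine ⟨(m : ℝ) ^ d, ?_⟩
  rintro _ ⟨y, rfl⟩
  exact abs_jdisc_le m d P y.1 y.2

/-- Approximating a box from below by a rational box. -/
lemma rat_approx (m d : ℕ) (hd : 1 ≤ d) (P : (Fin d → Fin m) → (Fin d → ℝ)) (y : Fin d → ℝ)
    (hy : ∀ i, y i ∈ Set.Ico (0 : ℝ) 1) (ε : ℝ) (hε : 0 < ε) :
    ∃ q : Fin d → ℚ, (∀ i, (q i : ℝ) ∈ Set.Ico (0 : ℝ) 1) ∧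
      |jdisc m d P (anchoredBox d y)| ≤ |jdisc m d P (anchoredBox d fun i => (q i : ℝ))| + ε := by
  by_cases h0 : ∃ i, y i = 0
  · obtain ⟨i, hi⟩ := h0
    refine ⟨0, by simp, ?_⟩
    have h1 : anchoredBox d y = ∅ := Set.univ_pi_eq_empty (i := i) (by simp [hi])
    have h2 : jdisc m d P (anchoredBox d y) = 0 := by rw [h1]; simp [jdisc]
    rw [h2, abs_zero]
    positivity
  · push Not at h0
    have hpos : ∀ i, 0 < y i := fun i => lt_of_le_of_ne (hy i).1 (h0 i).symm
    have hd0 : (0 : ℝ) < d := by exact_mod_cast hd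
    set η : ℝ := ε / (d * ((m : ℝ) ^ d + 1)) with hη
    have hη0 : 0 < η := by positivity
    have hex : ∀ i, ∃ q : ℚ, 0 ≤ (q : ℝ) ∧ (q : ℝ) < y i ∧ y i - q ≤ η ∧
        ∀ x, P x i < y i → P x i < q := by
      intro i
      have e1 : ∀ᶠ L in nhdsWithin (y i) (Set.Iio (y i)), 0 < L :=
        nhdsWithin_le_nhds (lt_mem_nhds (hpos i))
      have e2 : ∀ᶠ L in nhdsWithin (y i) (Set.Iio (y i)), y i - η < L :=
        nhdsWithin_le_nhds (lt_mem_nhds (by linarith))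
      have e3 : ∀ᶠ L in nhdsWithin (y i) (Set.Iio (y i)), ∀ x, P x i < y i → P x i < L := by
        rw [Filter.eventually_all]
        intro x
        by_cases hx : P x i < y i
        · have : ∀ᶠ L in nhdsWithin (y i) (Set.Iio (y i)), P x i < L :=
            nhdsWithin_le_nhds (lt_mem_nhds hx)
          filter_upwards [this] with L hL _ using hL
        · exact Filter.Eventually.of_forall fun L h => absurd h hx
      have e4 : ∀ᶠ L in nhdsWithin (y i) (Set.Iio (y i)), L < y i := self_mem_nhdsWithin
      obtain ⟨L, hL1, hL2, hL3, hL4⟩ := (e1.and (e2.and (e3.and e4))).exists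
      obtain ⟨q, hq1, hq2⟩ := exists_rat_btwn hL4
      exact ⟨q, by linarith, hq2, by linarith, fun x hx => (hL3 x hx).trans hq1⟩
    choose q hq0 hqy hqη hqx using hex
    refine ⟨q, fun i => ⟨hq0 i, (hqy i).trans (hy i).2⟩, ?_⟩
    have hcount : ∀ x, (P x ∈ anchoredBox d y ↔ P x ∈ anchoredBox d fun i => (q i : ℝ)) := by
      intro x
      simp only [anchoredBox, Set.mem_pi, Set.mem_univ, true_imp_iff, Set.mem_Ico]
      exact forall_congr' fun i => ⟨fun h => ⟨h.1, hqx i x h.2⟩, fun h => ⟨h.1, h.2.trans (hqy i)⟩⟩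
    have hvol : ∏ i, y i - ∏ i, (q i : ℝ) ≤ d * η := by
      refine (prod_sub_le Finset.univ (fun i => (q i : ℝ)) y hq0 (fun i => (hqy i).le)
        fun i => (hy i).2.le).trans ?_
      calc _ ≤ ∑ i : Fin d, η := Finset.sum_le_sum fun i _ => hqη i
        _ = _ := by simp
    have hvol0 : ∏ i, (q i : ℝ) ≤ ∏ i, y i := Finset.prod_le_prod (fun i _ => hq0 i)
      fun i _ => (hqy i).le
    have hdiff : jdisc m d P (anchoredBox d y) - jdisc m d P (anchoredBox d fun i => (q i : ℝ)) =
        -((m : ℝ) ^ d * (∏ i, y i - ∏ i, (q i : ℝ))) := by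
      unfold jdisc
      rw [volume_anchoredBox d y fun i => (hy i).1, volume_anchoredBox d _ hq0]
      have hfe : (@Finset.filter _ (fun x => P x ∈ anchoredBox d y)
          (fun _ => Classical.propDecidable _) Finset.univ) =
          (@Finset.filter _ (fun x => P x ∈ anchoredBox d fun i => (q i : ℝ))
          (fun _ => Classical.propDecidable _) Finset.univ) := by
        ext x
        simp only [Finset.mem_filter, hcount x]
      rw [hfe]
      ring
    have hN : (0 : ℝ) ≤ (m : ℝ) ^ d := by positivity
    have habs : |jdisc m d P (anchoredBox d y) -
        jdisc m d P (anchoredBox d fun i => (q i : ℝ))| ≤ ε := by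
      rw [hdiff, abs_neg, abs_of_nonneg (mul_nonneg hN (by linarith))]
      calc (m : ℝ) ^ d * (∏ i, y i - ∏ i, (q i : ℝ)) ≤ ((m : ℝ) ^ d + 1) * (d * η) := by
            gcongr
            linarith
        _ = ε := by rw [hη]; field_simp
    have := abs_sub_abs_le_abs_sub (jdisc m d P (anchoredBox d y))
      (jdisc m d P (anchoredBox d fun i => (q i : ℝ)))
    linarith

lemma starDisc_eq_rat (m d : ℕ) (hd : 1 ≤ d) (P : (Fin d → Fin m) → (Fin d → ℝ)) :
    starDisc m d P = ⨆ q : {q : Fin d → ℚ // ∀ i, (q i : ℝ) ∈ Set.Ico (0 : ℝ) 1},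
      |jdisc m d P (anchoredBox d fun i => (q.1 i : ℝ))| := by
  have hb : BddAbove (Set.range fun q : {q : Fin d → ℚ // ∀ i, (q i : ℝ) ∈ Set.Ico (0 : ℝ) 1} =>
      |jdisc m d P (anchoredBox d fun i => (q.1 i : ℝ))|) := by
    refine ⟨(m : ℝ) ^ d, ?_⟩
    rintro _ ⟨q, rfl⟩
    exact abs_jdisc_le m d P _ q.2
  have : Nonempty {y : Fin d → ℝ // ∀ i, y i ∈ Set.Ico (0 : ℝ) 1} := ⟨⟨0, by simp⟩⟩
  have : Nonempty {q : Fin d → ℚ // ∀ i, (q i : ℝ) ∈ Set.Ico (0 : ℝ) 1} := ⟨⟨0, by simp⟩⟩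
  apply le_antisymm
  · refine ciSup_le fun y => ?_
    refine le_of_forall_pos_le_add fun ε hε => ?_
    obtain ⟨q, hq, hle⟩ := rat_approx m d hd P y.1 y.2 ε hε
    refine hle.trans ?_
    gcongr
    exact le_ciSup hb ⟨q, hq⟩
  · refine ciSup_le fun q => ?_
    exact le_ciSup (bddAbove_jdisc m d P) ⟨fun i => (q.1 i : ℝ), q.2⟩

lemma integrable_starDisc (m d : ℕ) [NeZero m] (hd : 1 ≤ d) :
    Integrable (starDisc m d) (jitterMeasure m d) := by
  have hmeas : Measurable (starDisc m d) := by
    have : starDisc m d = fun P => ⨆ q : {q : Fin d → ℚ // ∀ i, (q i : ℝ) ∈ Set.Ico (0 : ℝ) 1},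
      |jdisc m d P (anchoredBox d fun i => (q.1 i : ℝ))| := funext fun P => starDisc_eq_rat m d hd P
    rw [this]
    refine Measurable.iSup fun q => ?_
    have := measurable_jdisc m d (anchoredBox d fun i => (q.1 i : ℝ))
      (measurableSet_anchoredBox d _) (anchoredBox_mono d fun i => (q.2 i).2.le)
    exact this.abs
  refine integrable_of_bdd hmeas ((m : ℝ) ^ d) fun P => ?_
  have : Nonempty {y : Fin d → ℝ // ∀ i, y i ∈ Set.Ico (0 : ℝ) 1} := ⟨⟨0, by simp⟩⟩
  have h0 : 0 ≤ starDisc m d P := Real.iSup_nonneg fun y => abs_nonneg _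
  rw [abs_of_nonneg h0]
  exact ciSup_le fun y => abs_jdisc_le m d P y.1 y.2


section general

variable {Ω ι : Type*} [MeasurableSpace Ω] {μ : Measure Ω} [IsProbabilityMeasure μ]
  {f : ι → Ω → ℝ}

lemma sum_half_bdd (hv : ∀ x ω, f x ω = 1 / 2 ∨ f x ω = -1 / 2) (S : Finset ι) (ω : Ω) :
    |∑ x ∈ S, f x ω| ≤ S.card := by
  refine (Finset.abs_sum_le_sum_abs _ _).trans ?_
  calc _ ≤ ∑ x ∈ S, (1 : ℝ) := Finset.sum_le_sum fun x _ => by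
        rcases hv x ω with h | h <;> rw [h] <;> norm_num [abs_le]
    _ = _ := by simp

lemma indep_sums (hi : iIndepFun f μ) (hm : ∀ x, Measurable (f x)) (S T : Finset ι)
    (hST : Disjoint S T) :
    IndepFun (fun ω => ∑ x ∈ S, f x ω) (fun ω => ∑ x ∈ T, f x ω) μ := by
  have h := hi.indepFun_finset S T hST hm
  have h1 := h.comp (φ := fun u : S → ℝ => ∑ x, u x) (ψ := fun u : T → ℝ => ∑ x, u x)
    (by fun_prop) (by fun_prop)
  convert h1 using 1
  · funext ω
    exact (Finset.sum_coe_sort S fun x => f x ω).symm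
  · funext ω
    exact (Finset.sum_coe_sort T fun x => f x ω).symm

lemma moments (hi : iIndepFun f μ) (hm : ∀ x, Measurable (f x))
    (hv : ∀ x ω, f x ω = 1 / 2 ∨ f x ω = -1 / 2) (h0 : ∀ x, ∫ ω, f x ω ∂μ = 0) (S : Finset ι) :
    ∫ ω, (∑ x ∈ S, f x ω) ∂μ = 0 ∧ ∫ ω, (∑ x ∈ S, f x ω) ^ 2 ∂μ = S.card / 4 ∧
    ∫ ω, (∑ x ∈ S, f x ω) ^ 4 ∂μ = (3 * (S.card : ℝ) ^ 2 - 2 * S.card) / 16 := by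
  classical
  induction S using Finset.induction_on with
  | empty => simp
  | insert y S hy ih =>
    obtain ⟨ih1, ih2, ih4⟩ := ih
    set X : Ω → ℝ := fun ω => ∑ x ∈ S, f x ω with hX
    have hXm : Measurable X := by fun_prop
    have hXb : ∀ ω, |X ω| ≤ S.card := sum_half_bdd hv S
    have hXk : ∀ k : ℕ, Integrable (fun ω => X ω ^ k) μ := fun k =>
      integrable_of_bdd (hXm.pow_const k) ((S.card : ℝ) ^ k) fun ω => by
        rw [abs_pow]; exact pow_le_pow_left₀ (abs_nonneg _) (hXb ω) k
    have hind : IndepFun X (f y) μ := by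
      have := indep_sums hi hm S {y} (by simpa using hy)
      simpa using this
    have hk0 : ∀ k : ℕ, ∫ ω, X ω ^ k * f y ω ∂μ = 0 := by
      intro k
      have h1 : IndepFun (fun ω => X ω ^ k) (f y) μ :=
        hind.comp (φ := fun u => u ^ k) (ψ := id) (by fun_prop) measurable_id
      rw [h1.integral_fun_mul_eq_mul_integral (hXm.pow_const k).aestronglyMeasurable
        (hm y).aestronglyMeasurable, h0, mul_zero]
    have hki : ∀ k : ℕ, Integrable (fun ω => X ω ^ k * f y ω) μ := fun k =>
      integrable_of_bdd ((hXm.pow_const k).mul (hm y)) ((S.card : ℝ) ^ k * 1) fun ω => by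
        rw [abs_mul, abs_pow]
        refine mul_le_mul (pow_le_pow_left₀ (abs_nonneg _) (hXb ω) k) ?_ (abs_nonneg _)
          (by positivity)
        rcases hv y ω with h | h <;> rw [h] <;> norm_num [abs_le]
    have hX1 : Integrable X μ := by simpa using hXk 1
    have hf1 : Integrable (f y) μ := by simpa using hki 0
    simp_rw [Finset.sum_insert hy]
    rw [Finset.card_insert_of_notMem hy]
    push_cast
    refine ⟨?_, ?_, ?_⟩
    · rw [integral_add hf1 hX1, h0, ih1, add_zero]
    · have hg : ∀ ω, (f y ω + ∑ x ∈ S, f x ω) ^ 2 = (X ω ^ 2 + 2 * (X ω ^ 1 * f y ω)) + 1 / 4 := by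
        intro ω
        change (f y ω + X ω) ^ _ = _
        rcases hv y ω with h | h <;> rw [h] <;> ring
      rw [integral_congr_ae (Filter.Eventually.of_forall hg)]
      have i1 : Integrable (fun ω => X ω ^ 2 + 2 * (X ω ^ 1 * f y ω)) μ :=
        (hXk 2).add ((hki 1).const_mul 2)
      rw [integral_add i1 (integrable_const _),
        integral_add (hXk 2) ((hki 1).const_mul 2), integral_const_mul, hk0, ih2]
      simp
      ring
    · have hg : ∀ ω, (f y ω + ∑ x ∈ S, f x ω) ^ 4 = (((X ω ^ 4 + 4 * (X ω ^ 3 * f y ω)) + (3 / 2) * X ω ^ 2) +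
          (X ω ^ 1 * f y ω)) + 1 / 16 := by
        intro ω
        change (f y ω + X ω) ^ _ = _
        rcases hv y ω with h | h <;> rw [h] <;> ring
      rw [integral_congr_ae (Filter.Eventually.of_forall hg)]
      have i1 : Integrable (fun ω => X ω ^ 4 + 4 * (X ω ^ 3 * f y ω)) μ :=
        (hXk 4).add ((hki 3).const_mul 4)
      have i2 : Integrable (fun ω => X ω ^ 4 + 4 * (X ω ^ 3 * f y ω) + (3 / 2) * X ω ^ 2) μ :=
        i1.add ((hXk 2).const_mul _)
      have i3 : Integrable (fun ω => X ω ^ 4 + 4 * (X ω ^ 3 * f y ω) + (3 / 2) * X ω ^ 2 +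
        X ω ^ 1 * f y ω) μ := i2.add (hki 1)
      rw [integral_add i3 (integrable_const _), integral_add i2 (hki 1),
        integral_add i1 ((hXk 2).const_mul _),
        integral_add (hXk 4) ((hki 3).const_mul 4), integral_const_mul, integral_const_mul,
        hk0, hk0, ih2, ih4]
      simp
      ring

lemma poly_ind (Y : ℝ) :
    (3.1 * Y + 4 * Y ^ 2 - Y ^ 4 - 1 / 2) ≤ if 1 / 8 ≤ Y then 9 else 0 := by
  split_ifs with h
  · nlinarith [sq_nonneg (Y ^ 2 - 2.5), sq_nonneg (Y - 1.6)]
  · push Not at h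
    nlinarith [sq_nonneg (Y ^ 2 - 1.3), sq_nonneg (Y + 1.15), mul_nonneg (sub_nonneg.2 h.le)
      (sq_nonneg (Y + 1.15)), sq_nonneg (Y * (Y + 1.15)), sq_nonneg (Y ^ 2 +Y/2 - 0.7)]

lemma small_ball (hi : iIndepFun f μ) (hm : ∀ x, Measurable (f x))
    (hv : ∀ x ω, f x ω = 1 / 2 ∨ f x ω = -1 / 2) (h0 : ∀ x, ∫ ω, f x ω ∂μ = 0) (S : Finset ι)
    (hS : 1 ≤ S.card) :
    1 / 18 ≤ μ.real {ω | √(S.card : ℝ) / 16 ≤ ∑ x ∈ S, f x ω} := by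
  obtain ⟨m1, m2, m4⟩ := moments hi hm hv h0 S
  set X : Ω → ℝ := fun ω => ∑ x ∈ S, f x ω with hX
  have hXm : Measurable X := by fun_prop
  have hb : (0 : ℝ) < S.card := by exact_mod_cast hS
  set s := √(S.card : ℝ) with hs
  have hs0 : 0 < s := Real.sqrt_pos.2 hb
  have hs2 : s ^ 2 = S.card := Real.sq_sqrt hb.le
  have hXk : ∀ k : ℕ, Integrable (fun ω => X ω ^ k) μ := fun k =>
    integrable_of_bdd (hXm.pow_const k) ((S.card : ℝ) ^ k) fun ω => by
      rw [abs_pow]; exact pow_le_pow_left₀ (abs_nonneg _) (sum_half_bdd hv S ω) k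
  have hA : MeasurableSet {ω | s / 16 ≤ X ω} := measurableSet_le measurable_const hXm
  have hX1 : Integrable X μ := by simpa using hXk 1
  have h1 : ∫ ω, (((6.2 / s) * X ω + (16 / s ^ 2) * X ω ^ 2) - (16 / s ^ 4) * X ω ^ 4 - 1 / 2) ∂μ ≤
      ∫ ω, ({ω | s / 16 ≤ X ω}.indicator (fun _ => (9 : ℝ)) ω) ∂μ := by
    refine integral_mono ((((hX1.const_mul _).add ((hXk 2).const_mul _)).sub
      ((hXk 4).const_mul _)).sub (integrable_const _)) ((integrable_const _).indicator hA) ?_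
    intro ω
    have := poly_ind (2 * X ω / s)
    have e : (1 / 8 ≤ 2 * X ω / s) ↔ s / 16 ≤ X ω := by
      rw [le_div_iff₀ hs0]
      constructor <;> intro h <;> linarith
    simp only [Set.indicator_apply, Set.mem_ofPred_eq]
    simp only [e] at this
    refine le_trans (le_of_eq ?_) this
    field_simp
    ring
  have i1 : Integrable (fun ω => (6.2 / s) * X ω + (16 / s ^ 2) * X ω ^ 2) μ :=
    (hX1.const_mul _).add ((hXk 2).const_mul _)
  have i2 : Integrable (fun ω => (6.2 / s) * X ω + (16 / s ^ 2) * X ω ^ 2 -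
    (16 / s ^ 4) * X ω ^ 4) μ := i1.sub ((hXk 4).const_mul _)
  rw [integral_indicator_const _ hA, integral_sub i2 (integrable_const _),
      integral_sub i1 ((hXk 4).const_mul _), integral_add (hX1.const_mul _)
      ((hXk 2).const_mul _), integral_const_mul, integral_const_mul, integral_const_mul,
      m1, m2, m4, ← hs2] at h1
  have e1 : 16 / s ^ 2 * (s ^ 2 / 4) = 4 := by field_simp; norm_num
  have e2 : 16 / s ^ 4 * ((3 * (s ^ 2) ^ 2 - 2 * s ^ 2) / 16) = 3 - 2 / s ^ 2 := by field_simp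
  have e3 : 0 < 2 / s ^ 2 := by positivity
  rw [e1, e2] at h1
  simp only [integral_const, probReal_univ, smul_eq_mul] at h1
  linarith

lemma tail_lower (hi : iIndepFun f μ) (hm : ∀ x, Measurable (f x))
    (hv : ∀ x ω, f x ω = 1 / 2 ∨ f x ω = -1 / 2) (h0 : ∀ x, ∫ ω, f x ω ∂μ = 0) (b : ℕ)
    (hb : 1 ≤ b) (q : ℕ) (hq : 1 ≤ q) : ∀ S : Finset ι, q * b ≤ S.card →
    (1 / 18 : ℝ) ^ q ≤ μ.real {ω | q * √(b : ℝ) / 16 ≤ ∑ x ∈ S, f x ω} := by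
  classical
  have meas : ∀ (S : Finset ι) (t : ℝ), MeasurableSet {ω | t ≤ ∑ x ∈ S, f x ω} := fun S t =>
    measurableSet_le measurable_const (by fun_prop)
  induction q, hq using Nat.le_induction with
  | base =>
    intro S hS
    have h1 : 1 ≤ S.card := by omega
    have h2 := small_ball hi hm hv h0 S h1
    refine le_trans (by simpa using h2) (measureReal_mono ?_)
    intro ω hω
    simp only [Set.mem_ofPred_eq] at hω ⊢
    refine le_trans ?_ hω
    have : √(b : ℝ) ≤ √(S.card : ℝ) := Real.sqrt_le_sqrt (by exact_mod_cast (by omega))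
    push_cast
    linarith
  | succ q hq ih =>
    intro S hS
    have hbS : b ≤ S.card := le_trans (by nlinarith) hS
    obtain ⟨T, hTS, hT⟩ := Finset.exists_subset_card_eq hbS
    have hd : Disjoint (S \ T) T := Finset.sdiff_disjoint
    have hc : q * b ≤ (S \ T).card := by
      rw [Finset.card_sdiff_of_subset hTS, hT]
      rw [Nat.add_mul, one_mul] at hS
      omega
    have h1 := ih (S \ T) hc
    have h2 := small_ball hi hm hv h0 T (by omega)
    rw [hT] at h2
    have h3 := (indep_sums hi hm (S \ T) T hd).measure_inter_preimage_eq_mul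
      (Set.Ici (q * √(b : ℝ) / 16)) (Set.Ici (√(b : ℝ) / 16)) measurableSet_Ici measurableSet_Ici
    have h4 : μ.real ({ω | q * √(b : ℝ) / 16 ≤ ∑ x ∈ S \ T, f x ω} ∩
        {ω | √(b : ℝ) / 16 ≤ ∑ x ∈ T, f x ω}) =
        μ.real {ω | q * √(b : ℝ) / 16 ≤ ∑ x ∈ S \ T, f x ω} *
        μ.real {ω | √(b : ℝ) / 16 ≤ ∑ x ∈ T, f x ω} := by
      rw [Measure.real, Measure.real, Measure.real, ← ENNReal.toReal_mul]
      exact congrArg _ h3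
    calc (1 / 18 : ℝ) ^ (q + 1) = (1 / 18 : ℝ) ^ q * (1 / 18) := pow_succ _ _
      _ ≤ _ := mul_le_mul h1 h2 (by norm_num) measureReal_nonneg
      _ = _ := h4.symm
      _ ≤ _ := by
        refine measureReal_mono ?_
        rintro ω ⟨ha, hb'⟩
        simp only [Set.mem_ofPred_eq] at ha hb' ⊢
        rw [← Finset.sum_sdiff hTS]
        push_cast
        linarith

lemma union_lower {K : Type*} (hi : iIndepFun f μ) (hm : ∀ x, Measurable (f x)) (S : K → Finset ι)
    (A : Finset K) (hd : ∀ k k', k ≠ k' → Disjoint (S k) (S k')) (t p : ℝ) (hp : p ≤ 1)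
    (h : ∀ k ∈ A, p ≤ μ.real {ω | t ≤ ∑ x ∈ S k, f x ω}) :
    1 - (1 - p) ^ A.card ≤ μ.real {ω | ∃ k ∈ A, t ≤ ∑ x ∈ S k, f x ω} := by
  classical
  have key : ∀ B : Finset K, B ⊆ A →
      μ.real {ω | ∀ k ∈ B, ∑ x ∈ S k, f x ω < t} ≤ (1 - p) ^ B.card := by
    intro B
    induction B using Finset.induction_on with
    | empty => intro _; simp
    | insert k B hk ih =>
      intro hB
      have hkA : k ∈ A := hB (Finset.mem_insert_self _ _)
      have ih' := ih ((Finset.subset_insert _ _).trans hB)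
      have hdis : Disjoint (B.biUnion S) (S k) := by
        rw [Finset.disjoint_biUnion_left]
        intro k' hk'
        exact hd k' k (by rintro rfl; exact hk hk')
      have hind := hi.indepFun_finset (B.biUnion S) (S k) hdis hm
      have := hind.measure_inter_preimage_eq_mul
        (⋂ k' ∈ B, {u : ↥(B.biUnion S) → ℝ |
          ∑ x : ↥(B.biUnion S), (if (x : ι) ∈ S k' then u x else 0) < t})
        {u : ↥(S k) → ℝ | ∑ x, u x < t} (by
          refine Finset.measurableSet_biInter B fun k' _ => measurableSet_lt ?_ measurable_const
          refine Finset.measurable_sum _ fun x _ => ?_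
          split_ifs <;> fun_prop)
        (measurableSet_lt (by fun_prop) measurable_const)
      have e1 : ((fun a (i : ↥(B.biUnion S)) => f i a) ⁻¹'
          (⋂ k' ∈ B, {u : ↥(B.biUnion S) → ℝ |
          ∑ x : ↥(B.biUnion S), (if (x : ι) ∈ S k' then u x else 0) < t})) =
          {ω | ∀ k ∈ B, ∑ x ∈ S k, f x ω < t} := by
        ext ω
        simp only [Set.mem_preimage, Set.mem_iInter, Set.mem_ofPred_eq]
        refine forall₂_congr fun k' hk' => ?_
        rw [Finset.sum_coe_sort (B.biUnion S) fun x => if x ∈ S k' then f x ω else 0,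
          ← Finset.sum_filter, Finset.filter_mem_eq_inter,
          Finset.inter_eq_right.2 (Finset.subset_biUnion_of_mem S hk')]
      have e2 : ((fun a (i : ↥(S k)) => f i a) ⁻¹'
          {u : ↥(S k) → ℝ | ∑ x, u x < t}) = {ω | ∑ x ∈ S k, f x ω < t} := by
        ext ω
        simp only [Set.mem_preimage, Set.mem_ofPred_eq]
        rw [Finset.sum_coe_sort (S k) fun x => f x ω]
      rw [e1, e2] at this
      have e3 : {ω | ∀ k' ∈ insert k B, ∑ x ∈ S k', f x ω < t} =
          {ω | ∀ k ∈ B, ∑ x ∈ S k, f x ω < t} ∩ {ω | ∑ x ∈ S k, f x ω < t} := by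
        ext ω
        simp only [Set.mem_ofPred_eq, Finset.forall_mem_insert, Set.mem_inter_iff]
        tauto
      have hlt : μ.real {ω | ∑ x ∈ S k, f x ω < t} ≤ 1 - p := by
        have hc : {ω | ∑ x ∈ S k, f x ω < t} = {ω | t ≤ ∑ x ∈ S k, f x ω}ᶜ := by
          ext ω; simp
        rw [hc, probReal_compl_eq_one_sub (measurableSet_le measurable_const (by fun_prop))]
        linarith [h k hkA]
      rw [e3, Measure.real, this, ENNReal.toReal_mul, Finset.card_insert_of_notMem hk, pow_succ]
      exact mul_le_mul ih' hlt ENNReal.toReal_nonneg (by apply pow_nonneg; linarith)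
  have hc : {ω | ∃ k ∈ A, t ≤ ∑ x ∈ S k, f x ω} = {ω | ∀ k ∈ A, ∑ x ∈ S k, f x ω < t}ᶜ := by
    ext ω; simp
  have hms : MeasurableSet {ω | ∀ k ∈ A, ∑ x ∈ S k, f x ω < t} := by
    have : {ω | ∀ k ∈ A, ∑ x ∈ S k, f x ω < t} = ⋂ k ∈ A, {ω | ∑ x ∈ S k, f x ω < t} := by
      ext ω; simp
    rw [this]
    exact Finset.measurableSet_biInter A fun k' _ => measurableSet_lt (by fun_prop) measurable_const
  rw [hc, probReal_compl_eq_one_sub hms]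
  linarith [key A subset_rfl]

end general


/-- centered indicator of the lower half of the cube `x` in direction `i` -/
def fs (m d : ℕ) (i : Fin d) (x : Fin d → Fin m) (p : Fin d → ℝ) : ℝ :=
  if (m : ℝ) * p i < x i + 1 / 2 then 1 / 2 else -1 / 2

lemma fs_val (m d : ℕ) (i : Fin d) (x : Fin d → Fin m) (p : Fin d → ℝ) :
    fs m d i x p = 1 / 2 ∨ fs m d i x p = -1 / 2 := by
  unfold fs; split_ifs <;> simp

lemma fs_meas (m d : ℕ) (i : Fin d) (x : Fin d → Fin m) : Measurable (fs m d i x) := by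
  unfold fs
  exact Measurable.ite (measurableSet_lt (by fun_prop) measurable_const) measurable_const
    measurable_const

lemma abs_fs_le (m d : ℕ) (i : Fin d) (x : Fin d → Fin m) (p : Fin d → ℝ) :
    |fs m d i x p| ≤ 1 := by
  rcases fs_val m d i x p with h | h <;> rw [h] <;> norm_num [abs_le]

lemma half_cube (m d : ℕ) [NeZero m] (i : Fin d) (x : Fin d → Fin m) :
    (cubeMeas m d x).real {p | (m : ℝ) * p i < x i + 1 / 2} = 1 / 2 := by
  have hm : (0 : ℝ) < m := by exact_mod_cast Nat.pos_of_ne_zero (NeZero.ne m)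
  have hms : MeasurableSet {p : Fin d → ℝ | (m : ℝ) * p i < x i + 1 / 2} :=
    measurableSet_lt (by fun_prop) measurable_const
  have he : {p : Fin d → ℝ | (m : ℝ) * p i < x i + 1 / 2} ∩ jitterCube m d x =
      Set.univ.pi fun j => Set.Ico ((x j : ℝ) / m)
        ((x j : ℝ) / m + (1 / m) * (if j = i then 1 / 2 else 1)) := by
    ext p
    rw [Set.mem_inter_iff, mem_jitterCube_iff]
    simp only [Set.mem_ofPred_eq, Set.mem_pi, Set.mem_univ, true_imp_iff, Set.mem_Ico]
    have e : ∀ j, ((x j : ℝ) / m ≤ p j ∧ p j < (x j : ℝ) / m + (1 / m) * (if j = i then 1 / 2 else 1))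
        ↔ ((x j : ℝ) ≤ m * p j ∧ m * p j < x j + (if j = i then 1 / 2 else 1)) := by
      intro j
      rw [div_le_iff₀ hm, mul_comm (p j), div_mul_eq_mul_div, one_mul, ← add_div, lt_div_iff₀ hm,
        mul_comm (p j)]
    simp only [e]
    constructor
    · rintro ⟨h1, h2⟩ j
      refine ⟨(h2 j).1, ?_⟩
      split_ifs with hj
      · subst hj; exact h1
      · exact (h2 j).2
    · intro h
      refine ⟨by simpa using (h i).2, fun j => ⟨(h j).1, (h j).2.trans_le ?_⟩⟩
      split_ifs <;> linarith
  rw [Measure.real, cubeMeas, Measure.smul_apply, Measure.restrict_apply hms, he,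
    Real.volume_pi_Ico, smul_eq_mul, ENNReal.toReal_mul, ENNReal.toReal_prod]
  have : ∀ j : Fin d, (ENNReal.ofReal ((x j : ℝ) / m + (1 / m) * (if j = i then 1 / 2 else 1) -
      (x j : ℝ) / m)).toReal = (1 / m) * (if j = i then 1 / 2 else 1) := by
    intro j
    rw [add_sub_cancel_left, ENNReal.toReal_ofReal]
    split_ifs <;> positivity
  simp_rw [this]
  rw [Finset.prod_mul_distrib, Finset.prod_ite_eq' Finset.univ i]
  simp
  field_simp

lemma fs_int (m d : ℕ) [NeZero m] (i : Fin d) (x : Fin d → Fin m) :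
    ∫ p, fs m d i x p ∂(cubeMeas m d x) = 0 := by
  have hms : MeasurableSet {p : Fin d → ℝ | (m : ℝ) * p i < x i + 1 / 2} :=
    measurableSet_lt (by fun_prop) measurable_const
  have : ∀ p, fs m d i x p = {p : Fin d → ℝ | (m : ℝ) * p i < x i + 1 / 2}.indicator
      (fun _ => (1 : ℝ)) p - 1 / 2 := by
    intro p
    simp only [fs, Set.indicator_apply, Set.mem_ofPred_eq]
    split_ifs <;> norm_num
  simp_rw [this]
  rw [integral_sub ((integrable_const _).indicator hms) (integrable_const _),
    integral_indicator_const _ hms, half_cube]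
  simp

/-- integrals against one coordinate factor out -/
lemma integral_indep_coord (m d : ℕ) [NeZero m] (x : Fin d → Fin m)
    (F : ((Fin d → Fin m) → (Fin d → ℝ)) → ℝ) (hF : Measurable F)
    (hFx : ∀ P p, F (Function.update P x p) = F P) (g : (Fin d → ℝ) → ℝ) (hg : Measurable g)
    (hg0 : ∫ p, g p ∂(cubeMeas m d x) = 0) :
    ∫ P, F P * g (P x) ∂(jitterMeasure m d) = 0 := by
  have hi : iIndepFun (fun (y : Fin d → Fin m) (P : (Fin d → Fin m) → (Fin d → ℝ)) => P y)
      (jitterMeasure m d) := by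
    rw [jitterMeasure_eq]
    exact iIndepFun_pi (X := fun _ p => p) fun _ => measurable_id.aemeasurable
  have h1 := hi.indepFun_finset (Finset.univ.erase x) {x} (by simp) (fun y => by fun_prop)
  let ext : (↥(Finset.univ.erase x) → (Fin d → ℝ)) → ((Fin d → Fin m) → (Fin d → ℝ)) :=
    fun u y => if h : y ∈ Finset.univ.erase x then u ⟨y, h⟩ else 0
  have hext : Measurable ext := by
    refine measurable_pi_lambda _ fun y => ?_
    by_cases h : y ∈ Finset.univ.erase x
    · simp only [ext, h, dite_true]
      exact measurable_pi_apply _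
    · simp only [ext, h, dite_false]
      exact measurable_const
  have h2 := h1.comp (φ := fun u => F (ext u))
    (ψ := fun u : ↥({x} : Finset (Fin d → Fin m)) → (Fin d → ℝ) =>
      g (u ⟨x, Finset.mem_singleton_self x⟩)) (hF.comp hext) (hg.comp (measurable_pi_apply _))
  have e1 : (fun u => F (ext u)) ∘ (fun (P : (Fin d → Fin m) → (Fin d → ℝ))
      (i : ↥(Finset.univ.erase x)) => P i) = F := by
    funext P
    rw [← hFx P 0]
    simp only [Function.comp]
    congr 1
    funext y
    by_cases h : y = x
    · subst h
      simp [ext]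
    · simp [ext, h]
  rw [e1] at h2
  have h3 : IndepFun F (fun P => g (P x)) (jitterMeasure m d) := h2
  rw [h3.integral_fun_mul_eq_mul_integral hF.aestronglyMeasurable
    (hg.comp (measurable_pi_apply x)).aestronglyMeasurable]
  have e2 : ∫ P, g (P x) ∂(jitterMeasure m d) = ∫ p, g p ∂(cubeMeas m d x) := by
    have mp := measurePreserving_eval (cubeMeas m d) x
    rw [jitterMeasure_eq, ← mp.map_eq, integral_map mp.measurable.aemeasurable
      hg.aestronglyMeasurable]
  rw [e2, hg0, mul_zero]

/-- cubes of layer `κ` in direction `i` -/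
def slab (m d a : ℕ) (i : Fin d) (κ : Fin m) : Finset (Fin d → Fin m) :=
  Finset.univ.filter fun x => x i = κ ∧ ∀ j, j ≠ i → (x j : ℕ) < a

/-- layer sums -/
def lay (m d a : ℕ) (i : Fin d) (κ : Fin m) (P : (Fin d → Fin m) → (Fin d → ℝ)) : ℝ :=
  ∑ x ∈ slab m d a i κ, fs m d i x (P x)

open scoped Classical in
/-- choose an element of a predicate if possible -/
def selc {m : ℕ} (e : Fin m → Prop) : Option (Fin m) :=
  if h : ∃ κ, e κ then some h.choose else none

/-- events -/
def evt (m d a : ℕ) (t : ℝ) (P : (Fin d → Fin m) → (Fin d → ℝ)) (i : Fin d) (κ : Fin m) : Prop :=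
  a ≤ (κ : ℕ) ∧ t ≤ lay m d a i κ P

/-- selected layers -/
def sel (m d a : ℕ) (t : ℝ) (P : (Fin d → Fin m) → (Fin d → ℝ)) : Fin d → Option (Fin m) :=
  fun i => selc (evt m d a t P i)

/-- corner -/
def yk (m d a : ℕ) (k : Fin d → Option (Fin m)) (i : Fin d) : ℝ :=
  ((k i).elim (a : ℝ) fun κ => (κ : ℝ) + 1 / 2) / m

/-- main part -/
def hfun (m d a : ℕ) (k : Fin d → Option (Fin m)) (x : Fin d → Fin m) (p : Fin d → ℝ) : ℝ :=
  ∑ i, if k i = some (x i) ∧ ∀ j, j ≠ i → (x j : ℕ) < a then fs m d i x p else 0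

lemma selc_some {m : ℕ} (e : Fin m → Prop) (κ : Fin m) (h : selc e = some κ) : e κ := by
  unfold selc at h
  split_ifs at h with h1
  rw [← Option.some_injective _ h]
  exact h1.choose_spec

lemma selc_none {m : ℕ} (e : Fin m → Prop) (h : selc e = none) : ¬ ∃ κ, e κ := by
  unfold selc at h
  split_ifs at h with h1
  exact h1

lemma measurable_lay (m d a : ℕ) (i : Fin d) (κ : Fin m) : Measurable (lay m d a i κ) := by
  unfold lay
  exact Finset.measurable_sum _ fun x _ => (fs_meas m d i x).comp (measurable_pi_apply x)

lemma measurable_sel (m d a : ℕ) (t : ℝ) (k : Fin d → Option (Fin m)) :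
    MeasurableSet {P | sel m d a t P = k} := by
  have h1 : Measurable fun P => evt m d a t P := by
    refine measurable_pi_lambda _ fun i => measurable_pi_lambda _ fun κ => ?_
    refine measurableSet_setOfPred.1 ?_
    exact (MeasurableSet.const _).inter (measurableSet_le measurable_const (measurable_lay m d a i κ))
  have h2 : MeasurableSet {e : Fin d → Fin m → Prop | (fun i : Fin d => selc (e i)) = k} :=
    MeasurableSet.of_discrete
  exact h1 h2

lemma lay_update (m d a : ℕ) (i : Fin d) (κ : Fin m) (P) (x : Fin d → Fin m) (p : Fin d → ℝ)
    (hx : x ∉ slab m d a i κ) : lay m d a i κ (Function.update P x p) = lay m d a i κ P := by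
  unfold lay
  refine Finset.sum_congr rfl fun y hy => ?_
  rw [Function.update_of_ne]
  rintro rfl
  exact hx hy

lemma sel_update (m d a : ℕ) (t : ℝ) (P) (x : Fin d → Fin m) (p : Fin d → ℝ)
    (hx : ¬ ∃ i, ∀ j, j ≠ i → (x j : ℕ) < a) :
    sel m d a t (Function.update P x p) = sel m d a t P := by
  unfold sel evt
  funext i
  congr 1
  funext κ
  rw [lay_update]
  intro h
  simp only [slab, Finset.mem_filter] at h
  exact hx ⟨i, h.2.2⟩

lemma hfun_meas (m d a : ℕ) (k : Fin d → Option (Fin m)) (x : Fin d → Fin m) :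
    Measurable (hfun m d a k x) := by
  unfold hfun
  refine Finset.measurable_sum _ fun i _ => ?_
  split_ifs
  · exact fs_meas m d i x
  · exact measurable_const

lemma hfun_abs (m d a : ℕ) (k : Fin d → Option (Fin m)) (x : Fin d → Fin m) (p : Fin d → ℝ) :
    |hfun m d a k x p| ≤ d := by
  unfold hfun
  refine (Finset.abs_sum_le_sum_abs _ _).trans ?_
  calc _ ≤ ∑ i : Fin d, (1 : ℝ) := Finset.sum_le_sum fun i _ => by
        split_ifs
        · exact abs_fs_le m d i x p
        · simp
    _ = _ := by simp

lemma hfun_int (m d a : ℕ) [NeZero m] (k : Fin d → Option (Fin m)) (x : Fin d → Fin m) :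
    ∫ p, hfun m d a k x p ∂(cubeMeas m d x) = 0 := by
  unfold hfun
  rw [integral_finsetSum]
  · refine Finset.sum_eq_zero fun i _ => ?_
    split_ifs
    · exact fs_int m d i x
    · simp
  · intro i _
    split_ifs
    · exact integrable_of_bdd (fs_meas m d i x) 1 (abs_fs_le m d i x)
    · exact integrable_const _

lemma box_const (m d a : ℕ) [NeZero m] (k : Fin d → Option (Fin m))
    (hk : ∀ i κ, k i = some κ → a ≤ (κ : ℕ)) (x : Fin d → Fin m) (i : Fin d)
    (hx : ∀ j, j ≠ i → (x j : ℕ) < a) :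
    ∃ c : ℝ, ∀ p ∈ jitterCube m d x,
      (anchoredBox d (yk m d a k)).indicator (fun _ => (1 : ℝ)) p = c + hfun m d a k x p := by
  have hm : (0 : ℝ) < m := by exact_mod_cast Nat.pos_of_ne_zero (NeZero.ne m)
  have hh : ∀ p, hfun m d a k x p = if k i = some (x i) then fs m d i x p else 0 := by
    intro p
    unfold hfun
    rw [Finset.sum_eq_single i]
    · simp only [and_iff_left hx]
    · intro i' _ hi'
      rw [if_neg]
      rintro ⟨h1, -⟩
      have := hk i' _ h1
      have := hx i' hi'
      omega
    · simp
  have hy : ∀ (j : Fin d) (p : Fin d → ℝ), p j < yk m d a k j ↔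
      (m : ℝ) * p j < (k j).elim (a : ℝ) fun κ => (κ : ℝ) + 1 / 2 := by
    intro j p
    rw [yk, lt_div_iff₀ hm, mul_comm]
  have hae : ∀ j, (a : ℝ) ≤ (k j).elim (a : ℝ) fun κ => (κ : ℝ) + 1 / 2 := by
    intro j
    rcases hkj : k j with _ | κ
    · simp
    · have : (a : ℝ) ≤ (κ : ℕ) := by exact_mod_cast hk j κ hkj
      simp only [Option.elim_some]
      linarith
  have hlow : ∀ (p : Fin d → ℝ), p ∈ jitterCube m d x → ∀ j, (x j : ℕ) < a →
      p j < yk m d a k j := by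
    intro p hp j hj
    rw [hy]
    rw [mem_jitterCube_iff] at hp
    have h1 : ((x j : ℕ) : ℝ) + 1 ≤ a := by exact_mod_cast hj
    linarith [(hp j).2, hae j]
  have hbox : ∀ p ∈ jitterCube m d x, (p ∈ anchoredBox d (yk m d a k) ↔ p i < yk m d a k i) := by
    intro p hp
    have hp' := hp
    rw [mem_jitterCube_iff] at hp
    simp only [anchoredBox, Set.mem_pi, Set.mem_univ, true_imp_iff, Set.mem_Ico]
    constructor
    · intro h; exact (h i).2
    · intro h j
      have h0 : (0 : ℝ) ≤ (x j : ℕ) := Nat.cast_nonneg _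
      refine ⟨?_, ?_⟩
      · by_contra hneg
        push Not at hneg
        have := mul_neg_of_pos_of_neg hm hneg
        linarith [(hp j).1]
      · by_cases hj : j = i
        · rw [hj]; exact h
        · exact hlow p hp' j (hx j hj)
  have hind : ∀ p ∈ jitterCube m d x, (anchoredBox d (yk m d a k)).indicator (fun _ => (1 : ℝ)) p
      = if p i < yk m d a k i then 1 else 0 := by
    intro p hp
    by_cases h : p i < yk m d a k i
    · rw [if_pos h, Set.indicator_of_mem ((hbox p hp).2 h)]
    · rw [if_neg h, Set.indicator_of_notMem (fun h' => h ((hbox p hp).1 h'))]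
  by_cases hxi : (x i : ℕ) < a
  · refine ⟨1, fun p hp => ?_⟩
    rw [hind p hp, if_pos (hlow p hp i hxi), hh, if_neg, add_zero]
    intro h
    have := hk i _ h
    omega
  · push Not at hxi
    rcases hki : k i with _ | κ
    · refine ⟨0, fun p hp => ?_⟩
      rw [hind p hp, if_neg, hh, if_neg, add_zero]
      · rw [hki]; simp
      · rw [hy, hki]
        rw [mem_jitterCube_iff] at hp
        have h1 : (a : ℝ) ≤ (x i : ℕ) := by exact_mod_cast hxi
        simp only [Option.elim_none, not_lt]
        linarith [(hp i).1]
    · rcases lt_trichotomy (κ : ℕ) (x i : ℕ) with hlt | heq | hgt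
      · refine ⟨0, fun p hp => ?_⟩
        rw [hind p hp, if_neg, hh, if_neg, add_zero]
        · rw [hki]; intro h
          rw [Option.some_injective _ h] at hlt
          exact lt_irrefl _ hlt
        · rw [hy, hki]
          rw [mem_jitterCube_iff] at hp
          have h1 : ((κ : ℕ) : ℝ) + 1 ≤ (x i : ℕ) := by exact_mod_cast hlt
          simp only [Option.elim_some, not_lt]
          linarith [(hp i).1]
      · refine ⟨1 / 2, fun p hp => ?_⟩
        have heq' : κ = x i := Fin.ext heq
        have h2 : k i = some (x i) := by rw [hki, heq']
        rw [hind p hp, hh, if_pos h2, fs]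
        simp only [hy, h2, Option.elim_some]
        split_ifs <;> norm_num
      · refine ⟨1, fun p hp => ?_⟩
        rw [hind p hp, if_pos, hh, if_neg, add_zero]
        · rw [hki]; intro h
          rw [Option.some_injective _ h] at hgt
          exact lt_irrefl _ hgt
        · rw [hy, hki]
          rw [mem_jitterCube_iff] at hp
          have h1 : ((x i : ℕ) : ℝ) + 1 ≤ (κ : ℕ) := by exact_mod_cast hgt
          simp only [Option.elim_some]
          linarith [(hp i).2]


lemma yk_mem (m d a : ℕ) (ha : a < m) (k : Fin d → Option (Fin m)) (i : Fin d) :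
    yk m d a k i ∈ Set.Ico (0 : ℝ) 1 := by
  have hm : (0 : ℝ) < m := by exact_mod_cast (by omega : 0 < m)
  unfold yk
  rcases k i with _ | κ
  · simp only [Option.elim_none]
    refine ⟨by positivity, ?_⟩
    rw [div_lt_one hm]
    exact_mod_cast ha
  · simp only [Option.elim_some]
    refine ⟨by positivity, ?_⟩
    rw [div_lt_one hm]
    have : ((κ : ℕ) : ℝ) + 1 ≤ m := by exact_mod_cast κ.2
    linarith

/-- centered box indicator -/
def gfun (m d a : ℕ) (k : Fin d → Option (Fin m)) (x : Fin d → Fin m) (p : Fin d → ℝ) : ℝ :=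
  (anchoredBox d (yk m d a k)).indicator (fun _ => (1 : ℝ)) p -
    (cubeMeas m d x).real (anchoredBox d (yk m d a k))

lemma gfun_meas (m d a : ℕ) (k : Fin d → Option (Fin m)) (x : Fin d → Fin m) :
    Measurable (gfun m d a k x) :=
  (measurable_const.indicator (measurableSet_anchoredBox d _)).sub measurable_const

lemma gfun_abs (m d a : ℕ) [NeZero m] (k : Fin d → Option (Fin m)) (x : Fin d → Fin m)
    (p : Fin d → ℝ) : |gfun m d a k x p| ≤ 1 := by
  unfold gfun
  have h1 : (cubeMeas m d x).real (anchoredBox d (yk m d a k)) ≤ 1 := measureReal_le_one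
  have h2 : 0 ≤ (cubeMeas m d x).real (anchoredBox d (yk m d a k)) := measureReal_nonneg
  by_cases h : p ∈ anchoredBox d (yk m d a k)
  · rw [Set.indicator_of_mem h, abs_le]; constructor <;> linarith
  · rw [Set.indicator_of_notMem h, abs_le]; constructor <;> linarith

lemma gfun_int (m d a : ℕ) [NeZero m] (k : Fin d → Option (Fin m)) (x : Fin d → Fin m) :
    ∫ p, gfun m d a k x p ∂(cubeMeas m d x) = 0 := by
  unfold gfun
  rw [integral_sub ((integrable_const _).indicator (measurableSet_anchoredBox d _))
    (integrable_const _), integral_indicator_const _ (measurableSet_anchoredBox d _)]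
  simp

lemma ae_cube_one (m d : ℕ) (x : Fin d → Fin m) :
    ∀ᵐ p ∂(cubeMeas m d x), p ∈ jitterCube m d x := by
  unfold cubeMeas
  exact Measure.ae_smul_measure (ae_restrict_mem (measurableSet_jitterCube m d x)) _

lemma gfun_eq (m d a : ℕ) [NeZero m] (k : Fin d → Option (Fin m))
    (hk : ∀ i κ, k i = some κ → a ≤ (κ : ℕ)) (x : Fin d → Fin m) (i : Fin d)
    (hx : ∀ j, j ≠ i → (x j : ℕ) < a) (p : Fin d → ℝ) (hp : p ∈ jitterCube m d x) :
    gfun m d a k x p = hfun m d a k x p := by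
  obtain ⟨c, hc⟩ := box_const m d a k hk x i hx
  have h1 : ∫ p, (anchoredBox d (yk m d a k)).indicator (fun _ => (1 : ℝ)) p ∂(cubeMeas m d x) =
      ∫ p, (c + hfun m d a k x p) ∂(cubeMeas m d x) := by
    refine integral_congr_ae ?_
    filter_upwards [ae_cube_one m d x] with p hp using hc p hp
  rw [integral_indicator_const _ (measurableSet_anchoredBox d _), integral_add (integrable_const _)
    (integrable_of_bdd (hfun_meas m d a k x) d (hfun_abs m d a k x)), hfun_int] at h1
  simp at h1
  rw [gfun, hc p hp, h1]
  ring

lemma sum_hfun (m d a : ℕ) (k : Fin d → Option (Fin m)) (P : (Fin d → Fin m) → (Fin d → ℝ)) :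
    ∑ x, hfun m d a k x (P x) = ∑ i, (k i).elim 0 fun κ => lay m d a i κ P := by
  unfold hfun
  rw [Finset.sum_comm]
  refine Finset.sum_congr rfl fun i _ => ?_
  rcases k i with _ | κ
  · simp
  · simp only [Option.elim_some, Option.some.injEq]
    rw [lay, slab, Finset.sum_filter]
    refine Finset.sum_congr rfl fun x _ => ?_
    simp only [eq_comm]

lemma structural (m d a : ℕ) [NeZero m] (hd : 1 ≤ d) (ha : a < m) (t : ℝ) (ht : 0 ≤ t) :
    ∑ i : Fin d, t * (jitterMeasure m d).real
      {P | ∃ κ ∈ Finset.univ.filter (fun κ : Fin m => a ≤ (κ : ℕ)), t ≤ lay m d a i κ P} ≤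
      expStarDisc m d := by
  set μ := jitterMeasure m d with hμ
  let I : (Fin d → Option (Fin m)) → ((Fin d → Fin m) → (Fin d → ℝ)) → ℝ :=
    fun k => {P | sel m d a t P = k}.indicator (fun _ => (1 : ℝ))
  have hIm : ∀ k, Measurable (I k) := fun k =>
    measurable_const.indicator (measurable_sel m d a t k)
  have hIb : ∀ k P, |I k P| ≤ 1 := by
    intro k P
    by_cases h : sel m d a t P = k
    · simp [I, h]
    · simp [I, h]
  have hsum : ∀ (v : (Fin d → Option (Fin m)) → ℝ) P, ∑ k, I k P * v k = v (sel m d a t P) := by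
    intro v P
    rw [Finset.sum_eq_single (sel m d a t P)]
    · simp [I]
    · intro k _ hk
      have : I k P = 0 := Set.indicator_of_notMem (fun h => hk h.symm) _
      rw [this, zero_mul]
    · simp
  have ig : ∀ k x, Integrable (fun P => I k P * gfun m d a k x (P x)) μ := fun k x =>
    integrable_of_bdd ((hIm k).mul ((gfun_meas m d a k x).comp (measurable_pi_apply x))) (1 * 1)
      fun P => by
        rw [abs_mul]
        exact mul_le_mul (hIb k P) (gfun_abs m d a k x _) (abs_nonneg _) zero_le_one
  have ih : ∀ k x, Integrable (fun P => I k P * hfun m d a k x (P x)) μ := fun k x =>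
    integrable_of_bdd ((hIm k).mul ((hfun_meas m d a k x).comp (measurable_pi_apply x))) (1 * d)
      fun P => by
        rw [abs_mul]
        exact mul_le_mul (hIb k P) (hfun_abs m d a k x _) (abs_nonneg _) zero_le_one
  have hkey : ∀ k x, ∫ P, I k P * gfun m d a k x (P x) ∂μ =
      ∫ P, I k P * hfun m d a k x (P x) ∂μ := by
    intro k x
    by_cases hk : ∀ i κ, k i = some κ → a ≤ (κ : ℕ)
    · by_cases hx : ∃ i, ∀ j, j ≠ i → (x j : ℕ) < a
      · obtain ⟨i, hx⟩ := hx
        refine integral_congr_ae ?_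
        filter_upwards [ae_mem_cube m d] with P hP
        rw [gfun_eq m d a k hk x i hx _ (hP x)]
      · have h0 : ∀ p, hfun m d a k x p = 0 := by
          intro p
          refine Finset.sum_eq_zero fun i _ => if_neg ?_
          rintro ⟨-, h⟩
          exact hx ⟨i, h⟩
        simp only [h0, mul_zero, integral_zero]
        refine integral_indep_coord m d x (I k) (hIm k) ?_ _ (gfun_meas m d a k x)
          (gfun_int m d a k x)
        intro P p
        simp only [I, Set.indicator_apply, Set.mem_ofPred_eq, sel_update m d a t P x p hx]
    · have h0 : ∀ P, I k P = 0 := by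
        intro P
        refine Set.indicator_of_notMem ?_ _
        intro h
        apply hk
        intro i κ hi
        rw [← (h : sel m d a t P = k)] at hi
        exact (selc_some _ κ hi).1
      simp only [h0, zero_mul]
  have hD : ∀ P, ∑ k, ∑ x, I k P * gfun m d a k x (P x) ≤ starDisc m d P := by
    intro P
    have e : ∑ k, ∑ x, I k P * gfun m d a k x (P x) =
        jdisc m d P (anchoredBox d (yk m d a (sel m d a t P))) := by
      simp_rw [← Finset.mul_sum]
      rw [hsum (fun k => ∑ x, gfun m d a k x (P x)) P, jdisc_eq m d P _
        (measurableSet_anchoredBox d _) (anchoredBox_mono d fun i => (yk_mem m d a ha _ i).2.le)]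
      rfl
    rw [e]
    refine (le_abs_self _).trans ?_
    exact le_ciSup (bddAbove_jdisc m d P) ⟨yk m d a (sel m d a t P), yk_mem m d a ha _⟩
  have hH : ∀ P, ∑ i : Fin d, {P | ∃ κ ∈ Finset.univ.filter (fun κ : Fin m => a ≤ (κ : ℕ)),
      t ≤ lay m d a i κ P}.indicator (fun _ => t) P ≤ ∑ k, ∑ x, I k P * hfun m d a k x (P x) := by
    intro P
    simp_rw [← Finset.mul_sum]
    rw [hsum (fun k => ∑ x, hfun m d a k x (P x)) P, sum_hfun]
    refine Finset.sum_le_sum fun i _ => ?_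
    rcases hs : sel m d a t P i with _ | κ
    · have := selc_none _ hs
      rw [Set.indicator_of_notMem]
      · simp
      · rintro ⟨κ, h1, h2⟩
        exact this ⟨κ, (Finset.mem_filter.1 h1).2, h2⟩
    · have := selc_some _ κ hs
      rw [Set.indicator_of_mem]
      · exact this.2
      · exact ⟨κ, Finset.mem_filter.2 ⟨Finset.mem_univ _, this.1⟩, this.2⟩
  have hE : ∀ i : Fin d, MeasurableSet {P | ∃ κ ∈ Finset.univ.filter
      (fun κ : Fin m => a ≤ (κ : ℕ)), t ≤ lay m d a i κ P} := by
    intro i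
    have : {P | ∃ κ ∈ Finset.univ.filter (fun κ : Fin m => a ≤ (κ : ℕ)), t ≤ lay m d a i κ P} =
        ⋃ κ ∈ Finset.univ.filter (fun κ : Fin m => a ≤ (κ : ℕ)), {P | t ≤ lay m d a i κ P} := by
      ext P; simp
    rw [this]
    exact Finset.measurableSet_biUnion _ fun κ _ =>
      measurableSet_le measurable_const (measurable_lay m d a i κ)
  calc _ = ∫ P, ∑ i : Fin d, {P | ∃ κ ∈ Finset.univ.filter (fun κ : Fin m => a ≤ (κ : ℕ)),
      t ≤ lay m d a i κ P}.indicator (fun _ => t) P ∂μ := by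
        rw [integral_finsetSum _ fun i _ => (integrable_const _).indicator (hE i)]
        refine Finset.sum_congr rfl fun i _ => ?_
        rw [integral_indicator_const _ (hE i), smul_eq_mul, mul_comm]
    _ ≤ ∫ P, ∑ k, ∑ x, I k P * hfun m d a k x (P x) ∂μ := by
        refine integral_mono ?_ ?_ hH
        · exact integrable_finsetSum _ fun i _ => (integrable_const _).indicator (hE i)
        · exact integrable_finsetSum _ fun k _ => integrable_finsetSum _ fun x _ => ih k x
    _ = ∫ P, ∑ k, ∑ x, I k P * gfun m d a k x (P x) ∂μ := by
        rw [integral_finsetSum _ fun k _ => integrable_finsetSum _ fun x _ => ih k x,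
          integral_finsetSum _ fun k _ => integrable_finsetSum _ fun x _ => ig k x]
        refine Finset.sum_congr rfl fun k _ => ?_
        rw [integral_finsetSum _ fun x _ => ih k x, integral_finsetSum _ fun x _ => ig k x]
        exact Finset.sum_congr rfl fun x _ => (hkey k x).symm
    _ ≤ _ := by
        refine integral_mono ?_ (integrable_starDisc m d hd) hD
        exact integrable_finsetSum _ fun k _ => integrable_finsetSum _ fun x _ => ig k x


lemma card_slab (m d a : ℕ) (ha : a ≤ m) (i : Fin d) (κ : Fin m) :
    (slab m d a i κ).card = a ^ (d - 1) := by
  have h1 : slab m d a i κ = Fintype.piFinset fun j : Fin d =>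
      if j = i then {κ} else Finset.univ.filter fun u : Fin m => (u : ℕ) < a := by
    ext x
    simp only [slab, Finset.mem_filter, Finset.mem_univ, true_and, Fintype.mem_piFinset]
    constructor
    · rintro ⟨h1, h2⟩ j
      split_ifs with hj
      · subst hj; simpa using h1
      · simpa using h2 j hj
    · intro h
      refine ⟨by simpa using h i, fun j hj => ?_⟩
      have := h j
      rw [if_neg hj] at this
      simpa using this
  have h2 : (Finset.univ.filter fun u : Fin m => (u : ℕ) < a).card = a := by
    rw [Fin.card_filter_val_lt]
    exact min_eq_right ha
  rw [h1, Fintype.card_piFinset, ← Finset.mul_prod_erase Finset.univ _ (Finset.mem_univ i)]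
  rw [Finset.prod_congr rfl (g := fun _ => a) (fun j hj => by
    rw [if_neg (Finset.ne_of_mem_erase hj), h2])]
  simp

lemma card_high (m a : ℕ) (ha : a ≤ m) :
    (Finset.univ.filter fun κ : Fin m => a ≤ (κ : ℕ)).card = m - a := by
  have h2 : (Finset.univ.filter fun u : Fin m => (u : ℕ) < a).card = a := by
    rw [Fin.card_filter_val_lt]
    exact min_eq_right ha
  have h3 := Finset.card_filter_add_card_filter_not (s := (Finset.univ : Finset (Fin m)))
    (fun u : Fin m => (u : ℕ) < a)
  simp only [not_lt, Finset.card_univ, Fintype.card_fin] at h3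
  omega

lemma event_prob (m d a q b : ℕ) [NeZero m] (ha : a ≤ m) (hq : 1 ≤ q) (hb : 1 ≤ b)
    (hqb : q * b ≤ a ^ (d - 1)) (hr : 1 ≤ m - a) (hqr : 18 ^ q ≤ 18 * (m - a)) (i : Fin d) :
    1 / 19 ≤ (jitterMeasure m d).real
      {P | ∃ κ ∈ Finset.univ.filter (fun κ : Fin m => a ≤ (κ : ℕ)),
        q * √(b : ℝ) / 16 ≤ lay m d a i κ P} := by
  have hi : iIndepFun (fun (x : Fin d → Fin m) (P : (Fin d → Fin m) → (Fin d → ℝ)) =>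
      fs m d i x (P x)) (jitterMeasure m d) := by
    rw [jitterMeasure_eq]
    exact iIndepFun_pi (X := fun x p => fs m d i x p) fun x => (fs_meas m d i x).aemeasurable
  have hm : ∀ x, Measurable (fun (P : (Fin d → Fin m) → (Fin d → ℝ)) => fs m d i x (P x)) :=
    fun x => (fs_meas m d i x).comp (measurable_pi_apply x)
  have hv : ∀ x (P : (Fin d → Fin m) → (Fin d → ℝ)), fs m d i x (P x) = 1 / 2 ∨
      fs m d i x (P x) = -1 / 2 := fun x P => fs_val m d i x (P x)
  have h0 : ∀ x, ∫ P, fs m d i x (P x) ∂(jitterMeasure m d) = 0 := by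
    intro x
    have mp := measurePreserving_eval (cubeMeas m d) x
    have := fs_int m d i x
    rw [← mp.map_eq, integral_map mp.measurable.aemeasurable
      (fs_meas m d i x).aestronglyMeasurable] at this
    exact this
  have h1 := fun κ => tail_lower hi hm hv h0 b hb q hq (slab m d a i κ)
    (by rw [card_slab m d a ha i κ]; exact hqb)
  have h2 := union_lower hi hm (slab m d a i) (Finset.univ.filter (fun κ : Fin m => a ≤ (κ : ℕ)))
    (by
      intro κ κ' hne
      rw [Finset.disjoint_left]
      intro x hx hx'
      simp only [slab, Finset.mem_filter] at hx hx'
      exact hne (hx.2.1.symm.trans hx'.2.1)) (q * √(b : ℝ) / 16) ((1 / 18 : ℝ) ^ q)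
    (pow_le_one₀ (by norm_num) (by norm_num)) (fun κ _ => h1 κ)
  refine le_trans ?_ h2
  rw [card_high m a ha]
  set r := m - a with hrdef
  have hr0 : (0 : ℝ) < r := by exact_mod_cast hr
  have hp : 1 / (18 * (r : ℝ)) ≤ (1 / 18 : ℝ) ^ q := by
    rw [one_div_pow]
    apply one_div_le_one_div_of_le (by positivity)
    exact_mod_cast hqr
  have hp1 : (1 / 18 : ℝ) ^ q ≤ 1 := pow_le_one₀ (by norm_num) (by norm_num)
  have h3 : (1 - (1 / 18 : ℝ) ^ q) ^ r ≤ exp (-(1 / 18)) := by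
    calc (1 - (1 / 18 : ℝ) ^ q) ^ r ≤ exp (-(1 / (18 * (r : ℝ)))) ^ r := by
          refine pow_le_pow_left₀ (by linarith) ?_ r
          have := Real.add_one_le_exp (-(1 / (18 * (r : ℝ))))
          linarith
      _ = exp (-(1 / 18)) := by
          rw [← Real.exp_nat_mul]
          congr 1
          field_simp
  have h4 : exp (-(1 / 18)) ≤ 18 / 19 := by
    rw [Real.exp_neg]
    have := Real.add_one_le_exp (1 / 18 : ℝ)
    rw [inv_le_comm₀ (exp_pos _) (by norm_num)]
    norm_num at this ⊢
    linarith
  linarith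

lemma lower_bound (d m : ℕ) (hd : 2 ≤ d) (hdm : d ≤ m) :
    1 / 2000 * d * (m : ℝ) ^ (((d : ℝ) - 1) / 2) * Real.sqrt (1 + Real.log ((m : ℝ) / d)) ≤
      expStarDisc m d := by
  have hm0 : 0 < m := by omega
  have : NeZero m := ⟨hm0.ne'⟩
  have hmR : (0 : ℝ) < m := by exact_mod_cast hm0
  have hdR : (0 : ℝ) < d := by exact_mod_cast (by omega : 0 < d)
  set r := m / d with hr
  have hr1 : 1 ≤ r := (Nat.one_le_div_iff (by omega)).2 hdm
  have hrd : r * d ≤ m := Nat.div_mul_le_self m d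
  have hrm : m < (r + 1) * d := by
    have := Nat.lt_div_mul_add (a := m) (b := d) (by omega)
    rw [Nat.add_mul, one_mul]; exact this
  have hr2 : r * 2 ≤ m := (Nat.mul_le_mul_left r hd).trans hrd
  set a := m - r with ha
  have hra : r ≤ a := by omega
  have ham : a < m := by omega
  have hmar : m - a = r := by omega
  set n := a ^ (d - 1) with hn
  have han : a ≤ n := Nat.le_self_pow (by omega) a
  set q := Nat.log 18 r + 1 with hq
  have hq1 : 1 ≤ q := by omega
  have hqn : q ≤ n := by
    have : Nat.log 18 r < r := Nat.log_lt_self 18 (by omega)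
    omega
  have hpow1 : 18 ^ q ≤ 18 * r := by
    rw [hq, pow_succ, mul_comm]
    exact Nat.mul_le_mul_left 18 (Nat.pow_log_le_self 18 (by omega))
  have hpow2 : r + 1 ≤ 18 ^ q := Nat.lt_pow_succ_log_self (by norm_num) r
  set b := n / q with hb
  have hb1 : 1 ≤ b := (Nat.one_le_div_iff (by omega)).2 hqn
  have hqb : q * b ≤ n := Nat.mul_div_le n q
  have hnqb : n ≤ 2 * (q * b) := by
    have h1 : n < b * q + q := Nat.lt_div_mul_add (by omega)
    have h2 : q * 1 ≤ q * b := Nat.mul_le_mul_left q hb1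
    have h3 : b * q = q * b := Nat.mul_comm _ _
    omega
  set t : ℝ := q * √(b : ℝ) / 16 with ht
  have ht0 : 0 ≤ t := by positivity
  have hE : ∀ i : Fin d, 1 / 19 ≤ (jitterMeasure m d).real
      {P | ∃ κ ∈ Finset.univ.filter (fun κ : Fin m => a ≤ (κ : ℕ)), t ≤ lay m d a i κ P} :=
    event_prob m d a q b ham.le hq1 hb1 hqb (by omega) (by rw [hmar]; exact hpow1)
  have hS := structural m d a (by omega) ham t ht0
  have h1 : (d : ℝ) * (t * (1 / 19)) ≤ expStarDisc m d := by
    refine le_trans ?_ hS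
    calc (d : ℝ) * (t * (1 / 19)) = ∑ i : Fin d, t * (1 / 19) := by simp
      _ ≤ _ := Finset.sum_le_sum fun i _ => mul_le_mul_of_nonneg_left (hE i) ht0
  -- numerics
  set Q : ℝ := (m : ℝ) ^ (((d : ℝ) - 1) / 2) with hQ
  set R : ℝ := Real.sqrt (1 + Real.log ((m : ℝ) / d)) with hR
  have hQ0 : 0 ≤ Q := by positivity
  have hR0 : 0 ≤ R := Real.sqrt_nonneg _
  have hQ2 : Q ^ 2 = (m : ℝ) ^ (d - 1) := by
    rw [hQ, ← Real.rpow_natCast, ← Real.rpow_mul hmR.le, ← Real.rpow_natCast]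
    congr 1
    rw [Nat.cast_sub (by omega)]
    push_cast
    ring
  have hd1 : (0 : ℝ) < (d : ℝ) - 1 := by
    have : (2 : ℝ) ≤ d := by exact_mod_cast hd
    linarith
  have haR : (m : ℝ) * (d - 1) ≤ a * d := by
    have e : (a : ℝ) = m - r := by rw [ha, Nat.cast_sub (by omega)]
    have e2 : (r : ℝ) * d ≤ m := by exact_mod_cast hrd
    rw [e]
    linarith
  have hexp : exp 1 ≤ 3 := by have := Real.exp_one_lt_d9; linarith
  have hQn : Q ^ 2 ≤ 3 * n := by
    have h2 : (m : ℝ) ≤ a * exp (1 / ((d : ℝ) - 1)) := by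
      have h3 := Real.add_one_le_exp (1 / ((d : ℝ) - 1))
      have h4 : (m : ℝ) ≤ a * (1 / ((d : ℝ) - 1) + 1) := by
        have : 1 / ((d : ℝ) - 1) + 1 = d / (d - 1) := by field_simp; ring
        rw [this, ← mul_div_assoc, le_div_iff₀ hd1]
        exact haR
      exact h4.trans (mul_le_mul_of_nonneg_left h3 (Nat.cast_nonneg _))
    rw [hQ2]
    calc (m : ℝ) ^ (d - 1) ≤ (a * exp (1 / ((d : ℝ) - 1))) ^ (d - 1) :=
          pow_le_pow_left₀ hmR.le h2 _
      _ = n * exp 1 := by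
          have e : ((d - 1 : ℕ) : ℝ) * (1 / ((d : ℝ) - 1)) = 1 := by
            rw [Nat.cast_sub (by omega), Nat.cast_one]
            exact mul_one_div_cancel hd1.ne'
          rw [mul_pow, ← Real.exp_nat_mul, hn, e]
          push_cast
          rfl
      _ ≤ n * 3 := mul_le_mul_of_nonneg_left hexp (Nat.cast_nonneg _)
      _ = _ := mul_comm _ _
  have hlog18 : Real.log 18 ≤ 3 := by
    rw [Real.log_le_iff_le_exp (by norm_num)]
    have h2 : exp 3 = exp 1 ^ 3 := by rw [← Real.exp_nat_mul]; norm_num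
    have h3 := Real.exp_one_gt_d9
    rw [h2]
    calc (18 : ℝ) ≤ 2.7 ^ 3 := by norm_num
      _ ≤ _ := pow_le_pow_left₀ (by norm_num) (by linarith) 3
  have hR2 : R ^ 2 ≤ 4 * q := by
    have hmd : (1 : ℝ) ≤ m / d := by
      rw [le_div_iff₀ hdR, one_mul]; exact_mod_cast hdm
    have hl0 : 0 ≤ Real.log ((m : ℝ) / d) := Real.log_nonneg hmd
    rw [hR, Real.sq_sqrt (by linarith)]
    have h2 : (m : ℝ) / d ≤ 18 ^ q := by
      rw [div_le_iff₀ hdR]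
      have h3 : m ≤ 18 ^ q * d := hrm.le.trans (Nat.mul_le_mul_right d hpow2)
      exact_mod_cast h3
    have h4 : Real.log ((m : ℝ) / d) ≤ q * 3 := by
      refine (Real.log_le_log (by linarith) h2).trans ?_
      rw [Real.log_pow]
      exact mul_le_mul_of_nonneg_left hlog18 (Nat.cast_nonneg _)
    have h5 : (1 : ℝ) ≤ q := by exact_mod_cast hq1
    linarith
  have ht2 : (q : ℝ) * n ≤ 512 * t ^ 2 := by
    have h2 : t ^ 2 = (q : ℝ) ^ 2 * b / 256 := by
      rw [ht, div_pow, mul_pow, Real.sq_sqrt (Nat.cast_nonneg _)]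
      norm_num
    have h3 : (n : ℝ) ≤ 2 * (q * b) := by exact_mod_cast hnqb
    rw [h2]
    nlinarith [mul_le_mul_of_nonneg_left h3 (Nat.cast_nonneg q : (0 : ℝ) ≤ q)]
  have hfin : Q * R ≤ 80 * t := by
    refine (pow_le_pow_iff_left₀ (by positivity) (by positivity) two_ne_zero).1 ?_
    calc (Q * R) ^ 2 = Q ^ 2 * R ^ 2 := mul_pow _ _ _
      _ ≤ (3 * n) * (4 * q) := mul_le_mul hQn hR2 (by positivity) (by positivity)
      _ = 12 * (q * n) := by ring
      _ ≤ (80 * t) ^ 2 := by nlinarith [sq_nonneg t]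
  have : (d : ℝ) * (Q * R) ≤ d * (80 * t) := mul_le_mul_of_nonneg_left hfin hdR.le
  have h9 : 0 ≤ (d : ℝ) * t := by positivity
  nlinarith

/-- There exist constants `c > 0` and `C > 0` such that for all integers `d ≥ 2` and `m ≥ d`,
the expected star discrepancy of a jittered sampling point set of `N = m^d` points in `[0,1)^d`
satisfies `c·d·m^((d−1)/2)·√(1 + log(m/d)) ≤ E[D*(P)] ≤ C·d·m^((d−1)/2)·√(1 + log(m/d))`. -/
theorem jittered_sampling_sharp_bounds :
    ∃ c C : ℝ, 0 < c ∧ 0 < C ∧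
      ∀ d m : ℕ, 2 ≤ d → d ≤ m →
        c * d * (m : ℝ) ^ (((d : ℝ) - 1) / 2) * Real.sqrt (1 + Real.log ((m : ℝ) / d))
            ≤ expStarDisc m d ∧
          expStarDisc m d
            ≤ C * d * (m : ℝ) ^ (((d : ℝ) - 1) / 2) * Real.sqrt (1 + Real.log ((m : ℝ) / d)) := by
  exact ⟨1 / 2000, 6000, by norm_num, by norm_num, fun d m hd hdm =>
    ⟨lower_bound d m hd hdm, upper_bound d m hd hdm⟩⟩
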